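/- Suppose X ~ N_n(θ₀, I_n) and consider the one-group shrinkage prior with 1/2 ≤ a < 1 applied independently to each coordinate. Let (p_n) be a sequence with p_n → ∞ and p_n = o(n), and set τ_n = ( (p_n/n) √(log(n/p_n)) )^{1/(2a)}. Then for every sequence M_n → ∞, sup_{θ₀ ∈ l₀[p_n]} E_{θ₀} Π( θ ∈ ℝⁿ : ||θ − T_{τ_n}(X)||² > M_n p_n log(n/p_n) | X ) → 0 as n → ∞, where T_{τ_n}(X) is the coordinatewise posterior mean. -/

import Mathlib

open MeasureTheory Filter Set

noncomputable section

namespace OneGroup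

/-- A one-group (global-local) shrinkage prior: the local variance `λ²` has density
`π(λ²) = K (λ²)^{-a-1} L(λ²)` on `(0,∞)`, where `L` is a positive, measurable,
non-constant slowly varying function, bounded above by `M`, and bounded below by
`c₀` on `[t₀, ∞)`. -/
structure Prior where
  K : ℝ
  a : ℝ
  L : ℝ → ℝ
  M : ℝ
  c₀ : ℝ
  t₀ : ℝ
  K_pos : 0 < K
  a_pos : 0 < a
  L_pos : ∀ t : ℝ, 0 < t → 0 < L t
  L_meas : Measurable L
  L_slow : ∀ c : ℝ, 0 < c → Tendsto (fun t => L (c * t) / L t) atTop (nhds 1)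
  L_nonconst : ∃ s : ℝ, 0 < s ∧ ∃ t : ℝ, 0 < t ∧ L s ≠ L t
  M_pos : 0 < M
  L_le : ∀ t : ℝ, 0 < t → L t ≤ M
  c₀_pos : 0 < c₀
  t₀_pos : 0 < t₀
  L_ge : ∀ t : ℝ, t₀ ≤ t → c₀ ≤ L t

/-- The (unnormalized) posterior weight, as a function of `t = λ²`, entering all
posterior expectations of functions of the shrinkage coefficient `κ = 1/(1+tτ²)`. -/
def wt (P : Prior) (x τ t : ℝ) : ℝ :=
  (1 + t * τ ^ 2) ^ (-(1:ℝ)/2) * t ^ (-P.a - 1) * P.L t *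
    Real.exp (-x ^ 2 / (2 * (1 + t * τ ^ 2)))

/-- Posterior expectation `E(g(κ) | x, τ)` of a function `g` of the shrinkage
coefficient `κ = 1/(1+λ²τ²)`. -/
def postExp (P : Prior) (g : ℝ → ℝ) (x τ : ℝ) : ℝ :=
  (∫ t in Ioi (0:ℝ), g (1 / (1 + t * τ ^ 2)) * wt P x τ t) /
    (∫ t in Ioi (0:ℝ), wt P x τ t)

/-- The posterior mean `T_τ(x) = x (1 - E(κ | x, τ))`. -/
def T (P : Prior) (τ x : ℝ) : ℝ := x * (1 - postExp P (fun κ => κ) x τ)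

/-- The marginal prior density `p_τ(θ)` of `θ`. -/
def pdens (P : Prior) (τ θ : ℝ) : ℝ :=
  ∫ u in Ioi (0:ℝ),
    (Real.sqrt (2 * Real.pi * u * τ ^ 2))⁻¹ * Real.exp (-θ ^ 2 / (2 * u * τ ^ 2)) *
      (P.K * u ^ (-P.a - 1) * P.L u)

/-- The unnormalized posterior density of `θ` given an observation `x ~ N(θ,1)`. -/
def postw (P : Prior) (τ x θ : ℝ) : ℝ := Real.exp (-(x - θ) ^ 2 / 2) * pdens P τ θ

/-- The `k`-th posterior moment of `θ` given `x`. -/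
def postMoment (P : Prior) (τ x : ℝ) (k : ℕ) : ℝ :=
  (∫ θ : ℝ, θ ^ k * postw P τ x θ) / (∫ θ : ℝ, postw P τ x θ)

/-- The posterior variance `Var(θ | x)`. -/
def postVar (P : Prior) (τ x : ℝ) : ℝ := postMoment P τ x 2 - (postMoment P τ x 1) ^ 2

/-- The standard normal density. -/
def gauss (z : ℝ) : ℝ := (Real.sqrt (2 * Real.pi))⁻¹ * Real.exp (-z ^ 2 / 2)

/-- Expectation of `f(X)` for `X ~ N(θ, 1)`. -/
def E1 (θ : ℝ) (f : ℝ → ℝ) : ℝ := ∫ x : ℝ, f x * gauss (x - θ)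

/-- Expectation of `f(X)` for `X ~ N_n(θ, I_n)`. -/
def EN (n : ℕ) (θ : Fin n → ℝ) (f : (Fin n → ℝ) → ℝ) : ℝ :=
  ∫ x : Fin n → ℝ, f x * ∏ i, gauss (x i - θ i)

/-- The posterior probability `Π(A | x)` of a set `A ⊆ ℝⁿ` given data `x`,
for the coordinatewise-independent posterior. -/
def postProb (P : Prior) (τ : ℝ) {n : ℕ} (x : Fin n → ℝ) (A : Set (Fin n → ℝ)) : ℝ :=
  (∫ θ in A, ∏ i, postw P τ (x i) (θ i)) /
    (∫ θ : Fin n → ℝ, ∏ i, postw P τ (x i) (θ i))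

/-- The set `l₀[p]` of nearly black vectors in `ℝⁿ`. -/
def nearlyBlack (n p : ℕ) : Set (Fin n → ℝ) :=
  {θ | (Finset.univ.filter fun i => θ i ≠ 0).card ≤ p}

end OneGroup

namespace OneGroup

/-- local prior kernel -/
def gk (P : Prior) (t : ℝ) : ℝ := t ^ (-P.a - 1) * P.L t

lemma gk_pos (P : Prior) {t : ℝ} (ht : 0 < t) : 0 < gk P t :=
  mul_pos (Real.rpow_pos_of_pos ht _) (P.L_pos t ht)

lemma gk_meas (P : Prior) : Measurable (gk P) := by
  unfold gk
  exact (measurable_id.pow_const _).mul P.L_meas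

lemma wt_eq (P : Prior) (x τ t : ℝ) : wt P x τ t =
    (1 + t * τ ^ 2) ^ (-(1:ℝ)/2) * gk P t * Real.exp (-x ^ 2 / (2 * (1 + t * τ ^ 2))) := by
  unfold wt gk; ring

lemma wt_meas (P : Prior) (x τ : ℝ) : Measurable (wt P x τ) := by
  have : wt P x τ = fun t => (1 + t * τ ^ 2) ^ (-(1:ℝ)/2) * gk P t *
    Real.exp (-x ^ 2 / (2 * (1 + t * τ ^ 2))) := by
    funext t; exact wt_eq P x τ t
  rw [this]
  have h := gk_meas P
  fun_prop

lemma u_ge {τ t : ℝ} (ht : 0 < t) : 1 ≤ 1 + t * τ ^ 2 := by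
  have : 0 ≤ t * τ ^ 2 := by positivity
  linarith

lemma wt_pos (P : Prior) (x τ : ℝ) {t : ℝ} (ht : 0 < t) : 0 < wt P x τ t := by
  rw [wt_eq]
  have := gk_pos P ht
  have := u_ge (τ := τ) ht
  positivity

lemma exp_le_one_aux (x : ℝ) {u : ℝ} (hu : 1 ≤ u) : Real.exp (-x ^ 2 / (2 * u)) ≤ 1 := by
  apply Real.exp_le_one_iff.2
  apply div_nonpos_of_nonpos_of_nonneg
  · nlinarith [sq_nonneg x]
  · linarith

lemma wt_le (P : Prior) (x τ : ℝ) {t : ℝ} (ht : 0 < t) : wt P x τ t ≤ gk P t := by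
  rw [wt_eq]
  have h1 := gk_pos P ht
  have hu := u_ge (τ := τ) ht
  have h2 : (1 + t * τ ^ 2) ^ (-(1:ℝ)/2) ≤ 1 :=
    Real.rpow_le_one_of_one_le_of_nonpos hu (by norm_num)
  have h3 := exp_le_one_aux x hu
  have h4 : 0 ≤ (1 + t * τ ^ 2) ^ (-(1:ℝ)/2) := by positivity
  calc _ ≤ 1 * gk P t * 1 := by gcongr
    _ = _ := by ring

lemma wt_int (P : Prior) (hg : IntegrableOn (gk P) (Ioi 0)) (x τ : ℝ) :
    IntegrableOn (wt P x τ) (Ioi 0) := by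
  refine Integrable.mono' hg (wt_meas P x τ).aestronglyMeasurable ?_
  refine (ae_restrict_iff' measurableSet_Ioi).2 (Eventually.of_forall fun t ht => ?_)
  rw [Real.norm_of_nonneg (wt_pos P x τ ht).le]
  exact wt_le P x τ ht

/-- bounded functions times wt are integrable -/
lemma bwt_int (P : Prior) (hg : IntegrableOn (gk P) (Ioi 0)) (x τ : ℝ) (f : ℝ → ℝ)
    (hf : Measurable f) (C : ℝ) (hC : ∀ t, 0 < t → |f t| ≤ C) :
    IntegrableOn (fun t => f t * wt P x τ t) (Ioi 0) := by
  refine Integrable.bdd_mul (c := C) (wt_int P hg x τ) hf.aestronglyMeasurable ?_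
  exact (ae_restrict_iff' measurableSet_Ioi).2 (Eventually.of_forall fun t ht => hC t ht)

lemma kap_mem {τ t : ℝ} (ht : 0 < t) :
    0 < 1 / (1 + t * τ ^ 2) ∧ 1 / (1 + t * τ ^ 2) ≤ 1 := by
  have := u_ge (τ := τ) ht
  refine ⟨by positivity, ?_⟩
  rw [div_le_one (by linarith)]; exact this

/-- continuous functions of kappa -/
lemma kwt_int (P : Prior) (hg : IntegrableOn (gk P) (Ioi 0)) (x τ : ℝ) (f : ℝ → ℝ)
    (hf : Continuous f) :
    IntegrableOn (fun t => f (1 / (1 + t * τ ^ 2)) * wt P x τ t) (Ioi 0) := by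
  obtain ⟨C, hC⟩ := (isCompact_Icc (a := (0:ℝ)) (b := 1)).exists_bound_of_continuousOn
    hf.continuousOn
  refine bwt_int P hg x τ _ (hf.measurable.comp (by fun_prop)) C fun t ht => ?_
  have := kap_mem (τ := τ) ht
  exact hC _ ⟨this.1.le, this.2⟩

lemma setInt_mono {f g : ℝ → ℝ} {S : Set ℝ} (hS : MeasurableSet S)
    (hf : ∀ t ∈ S, 0 ≤ f t) (hg : IntegrableOn g S) (h : ∀ t ∈ S, f t ≤ g t) :
    ∫ t in S, f t ≤ ∫ t in S, g t := by
  apply integral_mono_of_nonneg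
  · exact (ae_restrict_iff' hS).2 (Eventually.of_forall hf)
  · exact hg
  · exact (ae_restrict_iff' hS).2 (Eventually.of_forall h)

lemma D_ge_sub (P : Prior) (hg : IntegrableOn (gk P) (Ioi 0)) (x τ : ℝ) {S : Set ℝ}
    (hS : S ⊆ Ioi 0) : ∫ t in S, wt P x τ t ≤ ∫ t in Ioi 0, wt P x τ t := by
  apply setIntegral_mono_set (wt_int P hg x τ)
  · exact (ae_restrict_iff' measurableSet_Ioi).2
      (Eventually.of_forall fun t ht => (wt_pos P x τ ht).le)
  · exact LE.le.eventuallyLE hS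

lemma D1 (P : Prior) (hg : IntegrableOn (gk P) (Ioi 0)) :
    ∃ c > 0, ∀ τ : ℝ, τ ^ 2 ≤ 1 → ∀ x : ℝ,
      c * Real.exp (-x ^ 2 / 2) ≤ ∫ t in Ioi 0, wt P x τ t := by
  have hg1 : IntegrableOn (gk P) (Ioc 0 1) := hg.mono_set Ioc_subset_Ioi_self
  refine ⟨2 ^ (-(1:ℝ)/2) * ∫ t in Ioc 0 1, gk P t, ?_, ?_⟩
  · apply mul_pos (by positivity)
    rw [setIntegral_pos_iff_support_of_nonneg_ae]
    · have : Function.support (gk P) ∩ Ioc 0 1 = Ioc 0 1 := by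
        apply inter_eq_right.2
        intro t ht
        exact (gk_pos P ht.1).ne'
      rw [this]; simp
    · exact (ae_restrict_iff' measurableSet_Ioc).2
        (Eventually.of_forall fun t ht => (gk_pos P ht.1).le)
    · exact hg1
  · intro τ hτ x
    refine le_trans ?_ (D_ge_sub P hg x τ (S := Ioc 0 1) Ioc_subset_Ioi_self)
    rw [mul_assoc, mul_comm (∫ t in Ioc 0 1, gk P t), ← mul_assoc, ← integral_const_mul]
    apply setInt_mono measurableSet_Ioc
    · intro t ht
      have := gk_pos P ht.1
      positivity
    · exact (wt_int P hg x τ).mono_set Ioc_subset_Ioi_self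
    · intro t ht
      rw [wt_eq]
      have h1 := gk_pos P ht.1
      have hu := u_ge (τ := τ) ht.1
      have hu2 : 1 + t * τ ^ 2 ≤ 2 := by nlinarith [ht.2, ht.1, sq_nonneg τ]
      have h2 : (2:ℝ) ^ (-(1:ℝ)/2) ≤ (1 + t * τ ^ 2) ^ (-(1:ℝ)/2) :=
        Real.rpow_le_rpow_of_nonpos (by linarith) hu2 (by norm_num)
      have h3 : Real.exp (-x ^ 2 / 2) ≤ Real.exp (-x ^ 2 / (2 * (1 + t * τ ^ 2))) := by
        apply Real.exp_le_exp.2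
        rw [neg_div, neg_div, neg_le_neg_iff]
        apply div_le_div_of_nonneg_left (sq_nonneg x) (by norm_num) (by linarith)
      calc _ = 2 ^ (-(1:ℝ)/2) * gk P t * Real.exp (-x ^ 2 / 2) := by ring
        _ ≤ _ := by gcongr

lemma tpow (a : ℝ) {τ t : ℝ} (hτ : 0 < τ) (ht : 0 < t) :
    t ^ (-a - 1) = (t * τ ^ 2) ^ (-a - 1) * (τ ^ 2 * (τ ^ 2) ^ a) := by
  have h2 : (0:ℝ) < τ ^ 2 := by positivity
  rw [Real.mul_rpow ht.le h2.le]
  have : (τ ^ 2) ^ (-a - 1) * (τ ^ 2 * (τ ^ 2) ^ a) = 1 := by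
    have h3 : τ ^ 2 * (τ ^ 2) ^ a = (τ ^ 2) ^ (1 + a) := by
      rw [Real.rpow_add h2, Real.rpow_one]
    rw [h3, ← Real.rpow_add h2, show -a - 1 + (1 + a) = 0 by ring, Real.rpow_zero]
  rw [mul_assoc, this, mul_one]

lemma D2 (P : Prior) (hg : IntegrableOn (gk P) (Ioi 0)) :
    ∃ c > 0, ∀ τ : ℝ, 0 < τ → P.t₀ * τ ^ 2 ≤ 1 → ∀ x : ℝ,
      c * (τ ^ 2) ^ P.a * Real.exp (-x ^ 2 / 8) ≤ ∫ t in Ioi 0, wt P x τ t := by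
  refine ⟨5 ^ (-(1:ℝ)/2) * 4 ^ (-P.a - 1) * P.c₀, ?_, ?_⟩
  · have := P.c₀_pos; positivity
  intro τ hτ ht0 x
  have h2 : (0:ℝ) < τ ^ 2 := by positivity
  have hsub : Icc (3 / τ ^ 2) (4 / τ ^ 2) ⊆ Ioi (0:ℝ) := by
    intro t ht
    exact lt_of_lt_of_le (by positivity) ht.1
  refine le_trans ?_ (D_ge_sub P hg x τ hsub)
  have hvol : ∫ t in Icc (3 / τ ^ 2) (4 / τ ^ 2),
      5 ^ (-(1:ℝ)/2) * (4 ^ (-P.a - 1) * (τ ^ 2 * (τ ^ 2) ^ P.a) * P.c₀) * Real.exp (-x ^ 2 / 8) =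
      5 ^ (-(1:ℝ)/2) * 4 ^ (-P.a - 1) * P.c₀ * (τ ^ 2) ^ P.a * Real.exp (-x ^ 2 / 8) := by
    rw [setIntegral_const, Measure.real, Real.volume_Icc, ENNReal.toReal_ofReal]
    · rw [smul_eq_mul]; field_simp; ring
    · rw [← sub_div]; positivity
  rw [← hvol]
  have hc := P.c₀_pos
  apply setInt_mono measurableSet_Icc
  · intro t ht; positivity
  · exact (wt_int P hg x τ).mono_set hsub
  · intro t ht
    have htp := hsub ht
    have hs3 : 3 ≤ t * τ ^ 2 := by have := ht.1; rwa [div_le_iff₀ h2] at this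
    have hs4 : t * τ ^ 2 ≤ 4 := by have := ht.2; rwa [le_div_iff₀ h2] at this
    have htt : P.t₀ ≤ t := by
      by_contra hh
      push Not at hh
      nlinarith
    have hL := P.L_ge t htt
    rw [wt_eq, gk, tpow P.a hτ htp]
    have e1 : (5:ℝ) ^ (-(1:ℝ)/2) ≤ (1 + t * τ ^ 2) ^ (-(1:ℝ)/2) :=
      Real.rpow_le_rpow_of_nonpos (by linarith) (by linarith) (by norm_num)
    have e2 : (4:ℝ) ^ (-P.a - 1) ≤ (t * τ ^ 2) ^ (-P.a - 1) :=
      Real.rpow_le_rpow_of_nonpos (by linarith) (by linarith) (by linarith [P.a_pos])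
    have e3 : Real.exp (-x ^ 2 / 8) ≤ Real.exp (-x ^ 2 / (2 * (1 + t * τ ^ 2))) := by
      apply Real.exp_le_exp.2
      rw [neg_div, neg_div, neg_le_neg_iff]
      apply div_le_div_of_nonneg_left (sq_nonneg x) (by norm_num) (by linarith)
    have hLp := P.L_pos t htp
    gcongr

lemma base_int {a : ℝ} (ha : 0 < a) (ha' : a < 1) :
    IntegrableOn (fun s : ℝ => s ^ (-a) * (1 + s) ^ (-(3:ℝ)/2)) (Ioi 0) := by
  rw [← Ioc_union_Ioi_eq_Ioi (zero_le_one (α := ℝ))]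
  have hm : Measurable (fun s : ℝ => s ^ (-a) * (1 + s) ^ (-(3:ℝ)/2)) := by fun_prop
  apply IntegrableOn.union
  · have h : IntegrableOn (fun s : ℝ => s ^ (-a)) (Ioc 0 1) := by
      rw [← intervalIntegrable_iff_integrableOn_Ioc_of_le zero_le_one]
      exact intervalIntegral.intervalIntegrable_rpow' (by linarith)
    refine Integrable.mono' h hm.aestronglyMeasurable ?_
    refine (ae_restrict_iff' measurableSet_Ioc).2 (Eventually.of_forall fun s hs => ?_)
    have := hs.1
    rw [Real.norm_of_nonneg (by positivity)]
    have : (1 + s) ^ (-(3:ℝ)/2) ≤ 1 :=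
      Real.rpow_le_one_of_one_le_of_nonpos (by linarith) (by norm_num)
    have h0 : 0 ≤ s ^ (-a) := by positivity
    nlinarith
  · have h : IntegrableOn (fun s : ℝ => s ^ (-(3:ℝ)/2)) (Ioi 1) :=
      integrableOn_Ioi_rpow_of_lt (by norm_num) one_pos
    refine Integrable.mono' h hm.aestronglyMeasurable ?_
    refine (ae_restrict_iff' measurableSet_Ioi).2 (Eventually.of_forall fun s hs => ?_)
    have hs1 : 1 < s := hs
    have hs0 : 0 < s := by linarith
    rw [Real.norm_of_nonneg (by positivity)]
    have e1 : (1 + s) ^ (-(3:ℝ)/2) ≤ s ^ (-(3:ℝ)/2) :=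
      Real.rpow_le_rpow_of_nonpos hs0 (by linarith) (by norm_num)
    have e2 : s ^ (-a) ≤ 1 := Real.rpow_le_one_of_one_le_of_nonpos hs1.le (by linarith)
    have h0 : 0 ≤ (1 + s) ^ (-(3:ℝ)/2) := by positivity
    nlinarith

lemma one_sub_kap {u : ℝ} (hu : 1 + u ≠ 0) : 1 - 1 / (1 + u) = u / (1 + u) := by
  field_simp; ring

lemma N1 (P : Prior) (ha' : P.a < 1) :
    ∃ C > 0, ∀ τ : ℝ, 0 < τ → ∀ x : ℝ,
      ∫ t in Ioi 0, (1 - 1 / (1 + t * τ ^ 2)) * wt P x τ t ≤ C * (τ ^ 2) ^ P.a := by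
  set I := ∫ s in Ioi (0:ℝ), s ^ (-P.a) * (1 + s) ^ (-(3:ℝ)/2) with hI
  have hI0 : 0 ≤ I := by
    apply setIntegral_nonneg measurableSet_Ioi
    intro s hs
    have : 0 < s := hs
    positivity
  have hM := P.M_pos
  refine ⟨P.M * I + 1, by positivity, ?_⟩
  intro τ hτ x
  have h2 : (0:ℝ) < τ ^ 2 := by positivity
  have hq : 0 < (τ ^ 2) ^ P.a := by positivity
  have hb := base_int P.a_pos ha'
  have key : ∫ t in Ioi (0:ℝ), (P.M * (τ ^ 2 * (τ ^ 2) ^ P.a)) *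
      ((t * τ ^ 2) ^ (-P.a) * (1 + t * τ ^ 2) ^ (-(3:ℝ)/2)) = P.M * I * (τ ^ 2) ^ P.a := by
    rw [integral_const_mul,
      integral_comp_mul_right_Ioi (fun s => s ^ (-P.a) * (1 + s) ^ (-(3:ℝ)/2)) 0 h2]
    rw [zero_mul, ← hI, smul_eq_mul]; field_simp
  calc _ ≤ P.M * I * (τ ^ 2) ^ P.a := by
        rw [← key]
        apply setInt_mono measurableSet_Ioi
        · intro t ht
          have := kap_mem (τ := τ) ht
          exact mul_nonneg (by linarith) (wt_pos P x τ ht).le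
        · apply Integrable.const_mul
          have := (integrableOn_Ioi_comp_mul_right_iff
            (fun s : ℝ => s ^ (-P.a) * (1 + s) ^ (-(3:ℝ)/2)) 0 h2).2 (by simpa using hb)
          exact this
        · intro t ht
          have ht : 0 < t := ht
          have hu := u_ge (τ := τ) ht
          have hs : 0 < t * τ ^ 2 := by positivity
          rw [one_sub_kap (by linarith), wt_eq, gk, tpow P.a hτ ht]
          have e1 := P.L_le t ht
          have e2 := exp_le_one_aux x hu
          have e3 := P.L_pos t ht
          set s := t * τ ^ 2
          have e4 : s * s ^ (-P.a - 1) = s ^ (-P.a) := by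
            rw [Real.rpow_sub hs, Real.rpow_one]; field_simp
          have e5 : (1 + s)⁻¹ * (1 + s) ^ (-(1:ℝ)/2) = (1 + s) ^ (-(3:ℝ)/2) := by
            rw [← Real.rpow_neg_one, ← Real.rpow_add (by linarith)]; norm_num
          calc _ = (s * s ^ (-P.a - 1)) * ((1 + s)⁻¹ * (1 + s) ^ (-(1:ℝ)/2)) *
                (τ ^ 2 * (τ ^ 2) ^ P.a) * P.L t * Real.exp (-x ^ 2 / (2 * (1 + s))) := by ring
            _ ≤ (s * s ^ (-P.a - 1)) * ((1 + s)⁻¹ * (1 + s) ^ (-(1:ℝ)/2)) *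
                (τ ^ 2 * (τ ^ 2) ^ P.a) * P.M * 1 := by gcongr
            _ = _ := by rw [e4, e5]; ring
    _ ≤ _ := by nlinarith

lemma deriv_exp_aux (x τ : ℝ) {t : ℝ} (ht : 0 ≤ t) :
    HasDerivAt (fun t : ℝ => Real.exp (-x ^ 2 / (2 * (1 + t * τ ^ 2))))
      (Real.exp (-x ^ 2 / (2 * (1 + t * τ ^ 2))) *
        (x ^ 2 * τ ^ 2 / (2 * (1 + t * τ ^ 2) ^ 2))) t := by
  have hu : (0:ℝ) < 1 + t * τ ^ 2 := by positivity
  have h1 : HasDerivAt (fun t : ℝ => 2 * (1 + t * τ ^ 2)) (2 * (1 * τ ^ 2)) t :=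
    (((hasDerivAt_id t).mul_const (τ ^ 2)).const_add 1).const_mul 2
  have h2 := (((hasDerivAt_const t (-x ^ 2)).fun_div h1 (by positivity))).exp
  refine h2.congr_deriv ?_
  congr 1
  field_simp
  ring

lemma tendsto_u {τ : ℝ} (hτ : 0 < τ) : Tendsto (fun t : ℝ => 1 + t * τ ^ 2) atTop atTop :=
  tendsto_atTop_add_const_left _ _ (tendsto_id.atTop_mul_const (by positivity))

lemma tendsto_exp_aux (x : ℝ) {τ : ℝ} (hτ : 0 < τ) :
    Tendsto (fun t : ℝ => Real.exp (-x ^ 2 / (2 * (1 + t * τ ^ 2)))) atTop (nhds 1) := by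
  have h0 := Real.continuous_exp.tendsto 0
  rw [Real.exp_zero] at h0
  apply h0.comp
  apply Tendsto.div_atTop tendsto_const_nhds
  exact (tendsto_u hτ).const_mul_atTop (by norm_num)

lemma N2 (P : Prior) (ha : 1 / 2 ≤ P.a) (ha' : P.a < 1) {τ : ℝ} (hτ : 0 < τ) (x : ℝ) :
    x ^ 2 * ∫ t in Ioi 0, (1 - 1 / (1 + t * τ ^ 2)) ^ 2 * wt P x τ t
      ≤ 2 * P.M * (τ ^ 2) ^ P.a := by
  have h2 : (0:ℝ) < τ ^ 2 := by positivity
  have hq : 0 < (τ ^ 2) ^ P.a := by positivity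
  have hM := P.M_pos
  have hpos : ∀ t ∈ Ioi (0:ℝ), 0 ≤ Real.exp (-x ^ 2 / (2 * (1 + t * τ ^ 2))) *
        (x ^ 2 * τ ^ 2 / (2 * (1 + t * τ ^ 2) ^ 2)) := fun t ht => by positivity
  have hintg := integrableOn_Ioi_deriv_of_nonneg'
    (fun t ht => deriv_exp_aux x τ (t := t) ht) hpos (tendsto_exp_aux x hτ)
  have hval := integral_Ioi_of_hasDerivAt_of_nonneg'
    (fun t ht => deriv_exp_aux x τ (t := t) ht) hpos (tendsto_exp_aux x hτ)
  have hle : ∫ t in Ioi (0:ℝ), (2 * P.M * (τ ^ 2) ^ P.a) *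
      (Real.exp (-x ^ 2 / (2 * (1 + t * τ ^ 2))) *
        (x ^ 2 * τ ^ 2 / (2 * (1 + t * τ ^ 2) ^ 2))) ≤ 2 * P.M * (τ ^ 2) ^ P.a := by
    rw [integral_const_mul, hval]
    have := Real.exp_pos (-x ^ 2 / (2 * (1 + 0 * τ ^ 2)))
    have hc : 0 < 2 * P.M * (τ ^ 2) ^ P.a := by positivity
    nlinarith
  refine le_trans ?_ hle
  rw [← integral_const_mul]
  apply setInt_mono measurableSet_Ioi
  · intro t ht
    have := wt_pos P x τ ht
    positivity
  · exact Integrable.const_mul hintg _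
  · intro t ht
    have ht : 0 < t := ht
    have hu := u_ge (τ := τ) ht
    have hs : 0 < t * τ ^ 2 := by positivity
    rw [one_sub_kap (by linarith), wt_eq, gk, tpow P.a hτ ht]
    have e1 := P.L_le t ht
    have e3 := P.L_pos t ht
    set s := t * τ ^ 2
    have e4 : s ^ 2 * s ^ (-P.a - 1) ≤ (1 + s) ^ ((1:ℝ)/2) := by
      rw [← Real.rpow_natCast, ← Real.rpow_add hs]
      calc s ^ (((2:ℕ):ℝ) + (-P.a - 1)) ≤ (1 + s) ^ (((2:ℕ):ℝ) + (-P.a - 1)) :=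
            Real.rpow_le_rpow hs.le (by linarith) (by push_cast; linarith)
        _ ≤ _ := Real.rpow_le_rpow_of_exponent_le hu (by push_cast; linarith)
    have e5 : (1 + s) ^ ((1:ℝ)/2) * (1 + s) ^ (-(1:ℝ)/2) = 1 := by
      rw [← Real.rpow_add (by linarith)]; norm_num
    calc _ = (s ^ 2 * s ^ (-P.a - 1)) * (1 + s) ^ (-(1:ℝ)/2) * (x ^ 2 / (1 + s) ^ 2) *
          (τ ^ 2 * (τ ^ 2) ^ P.a) * P.L t * Real.exp (-x ^ 2 / (2 * (1 + s))) := by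
            rw [div_pow]; ring
      _ ≤ ((1 + s) ^ ((1:ℝ)/2)) * (1 + s) ^ (-(1:ℝ)/2) * (x ^ 2 / (1 + s) ^ 2) *
          (τ ^ 2 * (τ ^ 2) ^ P.a) * P.M * Real.exp (-x ^ 2 / (2 * (1 + s))) := by gcongr
      _ = _ := by rw [e5]; field_simp

lemma ftc_aux {b : ℝ} (hb : 0 < b) {τ : ℝ} (hτ : 0 < τ) (x : ℝ) :
    IntegrableOn (fun t : ℝ => (1 + t * τ ^ 2) ^ (-b - 1) *
      Real.exp (-x ^ 2 / (2 * (1 + t * τ ^ 2)))) (Ioi (1 / τ ^ 2)) := by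
  have h2 : (0:ℝ) < τ ^ 2 := by positivity
  have h0 : 0 < 1 / τ ^ 2 := by positivity
  have h : IntegrableOn (fun t : ℝ => (τ ^ 2) ^ (-b - 1) * t ^ (-b - 1)) (Ioi (1 / τ ^ 2)) :=
    (integrableOn_Ioi_rpow_of_lt (by linarith) h0).const_mul _
  refine Integrable.mono' h (by
    have : Measurable (fun t : ℝ => (1 + t * τ ^ 2) ^ (-b - 1) *
      Real.exp (-x ^ 2 / (2 * (1 + t * τ ^ 2)))) := by fun_prop
    exact this.aestronglyMeasurable) ?_
  refine (ae_restrict_iff' measurableSet_Ioi).2 (Eventually.of_forall fun t ht => ?_)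
  have ht0 : 0 < t := h0.trans ht
  have hu := u_ge (τ := τ) ht0
  rw [Real.norm_of_nonneg (by positivity), ← Real.mul_rpow h2.le ht0.le]
  have e2 := exp_le_one_aux x hu
  have e1 : (1 + t * τ ^ 2) ^ (-b - 1) ≤ (τ ^ 2 * t) ^ (-b - 1) :=
    Real.rpow_le_rpow_of_nonpos (by positivity) (by nlinarith) (by linarith)
  have : 0 ≤ (1 + t * τ ^ 2) ^ (-b - 1) := by positivity
  nlinarith [Real.exp_pos (-x ^ 2 / (2 * (1 + t * τ ^ 2)))]

lemma ibp {b : ℝ} (hb : 0 < b) {τ : ℝ} (hτ : 0 < τ) (x : ℝ) :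
    x ^ 2 * ∫ t in Ioi (1 / τ ^ 2), (1 + t * τ ^ 2) ^ (-b - 2) *
      Real.exp (-x ^ 2 / (2 * (1 + t * τ ^ 2))) ≤
    2 * b * ∫ t in Ioi (1 / τ ^ 2), (1 + t * τ ^ 2) ^ (-b - 1) *
      Real.exp (-x ^ 2 / (2 * (1 + t * τ ^ 2))) := by
  have h2 : (0:ℝ) < τ ^ 2 := by positivity
  have h0 : 0 < 1 / τ ^ 2 := by positivity
  have i1 := ftc_aux hb hτ x
  have i2 := ftc_aux (b := b + 1) (by linarith) hτ x
  rw [show -(b + 1) - 1 = -b - 2 by ring] at i2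
  have hd : ∀ t ∈ Ici (1 / τ ^ 2), HasDerivAt
      (fun t : ℝ => (1 + t * τ ^ 2) ^ (-b) * Real.exp (-x ^ 2 / (2 * (1 + t * τ ^ 2))))
      ((τ ^ 2 * x ^ 2 / 2) * ((1 + t * τ ^ 2) ^ (-b - 2) *
        Real.exp (-x ^ 2 / (2 * (1 + t * τ ^ 2)))) - (τ ^ 2 * b) * ((1 + t * τ ^ 2) ^ (-b - 1) *
        Real.exp (-x ^ 2 / (2 * (1 + t * τ ^ 2))))) t := by
    intro t ht
    have ht0 : 0 < t := h0.trans_le ht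
    have hu := u_ge (τ := τ) ht0
    have hu0 : 0 < 1 + t * τ ^ 2 := by linarith
    have h1 : HasDerivAt (fun t : ℝ => 1 + t * τ ^ 2) (1 * τ ^ 2) t :=
      ((hasDerivAt_id t).mul_const (τ ^ 2)).const_add 1
    have h3 := (h1.rpow_const (p := -b) (Or.inl hu0.ne')).fun_mul (deriv_exp_aux x τ ht0.le)
    refine h3.congr_deriv ?_
    have e : (1 + t * τ ^ 2) ^ (-b) = (1 + t * τ ^ 2) ^ (-b - 2) * (1 + t * τ ^ 2) ^ 2 := by
      rw [← Real.rpow_natCast (1 + t * τ ^ 2) 2, ← Real.rpow_add hu0]; norm_num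
    rw [e]
    field_simp
    ring
  have ht : Tendsto (fun t : ℝ => (1 + t * τ ^ 2) ^ (-b) *
      Real.exp (-x ^ 2 / (2 * (1 + t * τ ^ 2)))) atTop (nhds (0 * 1)) :=
    ((tendsto_rpow_neg_atTop hb).comp (tendsto_u hτ)).mul (tendsto_exp_aux x hτ)
  have hf := integral_Ioi_of_hasDerivAt_of_tendsto' hd
    ((i2.const_mul _).sub (i1.const_mul _)) ht
  rw [integral_sub (i2.const_mul _) (i1.const_mul _), integral_const_mul, integral_const_mul] at hf
  have hp : 0 ≤ (1 + 1 / τ ^ 2 * τ ^ 2) ^ (-b) *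
    Real.exp (-x ^ 2 / (2 * (1 + 1 / τ ^ 2 * τ ^ 2))) := by positivity
  set A := ∫ t in Ioi (1 / τ ^ 2), (1 + t * τ ^ 2) ^ (-b - 2) *
      Real.exp (-x ^ 2 / (2 * (1 + t * τ ^ 2)))
  set B := ∫ t in Ioi (1 / τ ^ 2), (1 + t * τ ^ 2) ^ (-b - 1) *
      Real.exp (-x ^ 2 / (2 * (1 + t * τ ^ 2)))
  have h5 : τ ^ 2 * (x ^ 2 * A) ≤ τ ^ 2 * (2 * b * B) := by nlinarith
  exact le_of_mul_le_mul_left h5 h2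

lemma N3 (P : Prior) (hg : IntegrableOn (gk P) (Ioi 0)) :
    ∃ C0 > 0, ∃ C1 > 0, ∀ τ : ℝ, 0 < τ → P.t₀ * τ ^ 2 ≤ 1 → ∀ x : ℝ,
      x ^ 2 * ∫ t in Ioi 0, (1 / (1 + t * τ ^ 2)) * wt P x τ t ≤
        C0 * (x ^ 2 * Real.exp (-x ^ 2 / 4)) + C1 * ∫ t in Ioi 0, wt P x τ t := by
  have hG : 0 ≤ ∫ t in Ioi 0, gk P t :=
    setIntegral_nonneg measurableSet_Ioi fun t ht => (gk_pos P ht).le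
  have hM := P.M_pos
  have hc := P.c₀_pos
  have hap := P.a_pos
  refine ⟨(∫ t in Ioi 0, gk P t) + 1, by positivity,
    P.M * 2 ^ (P.a + 1) * (2 * (P.a + 1/2)) / P.c₀, by positivity, ?_⟩
  intro τ hτ ht0 x
  have h2 : (0:ℝ) < τ ^ 2 := by positivity
  have h0 : 0 < 1 / τ ^ 2 := by positivity
  have hq : 0 < (τ ^ 2) ^ P.a := by positivity
  have hintg := kwt_int P hg x τ (fun κ => κ) continuous_id
  have hs1 : Ioc 0 (1 / τ ^ 2) ⊆ Ioi (0:ℝ) := Ioc_subset_Ioi_self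
  have hs2 : Ioi (1 / τ ^ 2) ⊆ Ioi (0:ℝ) := Ioi_subset_Ioi h0.le
  have hsplit : ∫ t in Ioi 0, (1 / (1 + t * τ ^ 2)) * wt P x τ t =
      (∫ t in Ioc 0 (1 / τ ^ 2), (1 / (1 + t * τ ^ 2)) * wt P x τ t) +
      ∫ t in Ioi (1 / τ ^ 2), (1 / (1 + t * τ ^ 2)) * wt P x τ t := by
    rw [← setIntegral_union (Ioc_disjoint_Ioi le_rfl) measurableSet_Ioi
      (hintg.mono_set hs1) (hintg.mono_set hs2), Ioc_union_Ioi_eq_Ioi h0.le]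
  have A1 : ∫ t in Ioc 0 (1 / τ ^ 2), (1 / (1 + t * τ ^ 2)) * wt P x τ t ≤
      ((∫ t in Ioi 0, gk P t) + 1) * Real.exp (-x ^ 2 / 4) := by
    calc _ ≤ ∫ t in Ioc 0 (1 / τ ^ 2), gk P t * Real.exp (-x ^ 2 / 4) := by
          apply setInt_mono measurableSet_Ioc
          · intro t ht
            have := kap_mem (τ := τ) ht.1
            exact mul_nonneg this.1.le (wt_pos P x τ ht.1).le
          · exact (hg.mono_set hs1).mul_const _
          · intro t ht
            have hk := kap_mem (τ := τ) ht.1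
            have hu := u_ge (τ := τ) ht.1
            have hu2 : t * τ ^ 2 ≤ 1 := by
              have := ht.2; rwa [le_div_iff₀ h2] at this
            have hgp := gk_pos P ht.1
            have e1 : (1 + t * τ ^ 2) ^ (-(1:ℝ)/2) ≤ 1 :=
              Real.rpow_le_one_of_one_le_of_nonpos hu (by norm_num)
            have e2 : Real.exp (-x ^ 2 / (2 * (1 + t * τ ^ 2))) ≤ Real.exp (-x ^ 2 / 4) := by
              apply Real.exp_le_exp.2
              rw [neg_div, neg_div, neg_le_neg_iff]
              apply div_le_div_of_nonneg_left (sq_nonneg x) (by linarith) (by linarith)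
            rw [wt_eq]
            calc _ ≤ 1 * (1 * gk P t * Real.exp (-x ^ 2 / 4)) := by
                  have := hk.2
                  gcongr
              _ = _ := by ring
      _ = (∫ t in Ioc 0 (1 / τ ^ 2), gk P t) * Real.exp (-x ^ 2 / 4) := integral_mul_const _ _
      _ ≤ _ := by
          gcongr
          have : ∫ t in Ioc 0 (1 / τ ^ 2), gk P t ≤ ∫ t in Ioi 0, gk P t := by
            apply setIntegral_mono_set hg
            · exact (ae_restrict_iff' measurableSet_Ioi).2
                (Eventually.of_forall fun t ht => (gk_pos P ht).le)
            · exact LE.le.eventuallyLE hs1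
          linarith
  have hb : 0 < P.a + 1/2 := by linarith
  have A2 := ibp hb hτ x
  have i1 := ftc_aux hb hτ x
  have i2 := ftc_aux (b := P.a + 1/2 + 1) (by linarith) hτ x
  rw [show -(P.a + 1/2 + 1) - 1 = -(P.a + 1/2) - 2 by ring] at i2
  have A3 : ∫ t in Ioi (1 / τ ^ 2), (1 / (1 + t * τ ^ 2)) * wt P x τ t ≤
      (P.M * 2 ^ (P.a + 1) * (τ ^ 2 * (τ ^ 2) ^ P.a)) *
      ∫ t in Ioi (1 / τ ^ 2), (1 + t * τ ^ 2) ^ (-(P.a + 1/2) - 2) *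
      Real.exp (-x ^ 2 / (2 * (1 + t * τ ^ 2))) := by
    rw [← integral_const_mul]
    apply setInt_mono measurableSet_Ioi
    · intro t ht
      have := kap_mem (τ := τ) (hs2 ht)
      exact mul_nonneg this.1.le (wt_pos P x τ (hs2 ht)).le
    · exact i2.const_mul _
    · intro t ht
      have ht' : 1 / τ ^ 2 < t := ht
      have htp : 0 < t := hs2 ht
      have hu := u_ge (τ := τ) htp
      have hs : 1 < t * τ ^ 2 := by rwa [div_lt_iff₀ h2] at ht'
      have e1 := P.L_le t htp
      have e3 := P.L_pos t htp
      rw [wt_eq, gk, tpow P.a hτ htp]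
      set s := t * τ ^ 2
      have e4 : s ^ (-P.a - 1) ≤ 2 ^ (P.a + 1) * (1 + s) ^ (-P.a - 1) := by
        have : (2:ℝ) ^ (P.a + 1) * (1 + s) ^ (-P.a - 1) = ((1 + s) / 2) ^ (-P.a - 1) := by
          rw [Real.div_rpow (by linarith) (by norm_num), show -P.a - 1 = -(P.a + 1) by ring,
            Real.rpow_neg (by norm_num : (0:ℝ) ≤ 2)]
          field_simp
        rw [this]
        exact Real.rpow_le_rpow_of_nonpos (by linarith) (by linarith) (by linarith)
      have e5 : (1 + s)⁻¹ * (1 + s) ^ (-(1:ℝ)/2) * (1 + s) ^ (-P.a - 1) =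
          (1 + s) ^ (-(P.a + 1/2) - 2) := by
        rw [← Real.rpow_neg_one, ← Real.rpow_add (by linarith), ← Real.rpow_add (by linarith)]
        congr 1; ring
      rw [← e5]
      calc _ = (1 + s)⁻¹ * (1 + s) ^ (-(1:ℝ)/2) * s ^ (-P.a - 1) * (τ ^ 2 * (τ ^ 2) ^ P.a) *
            P.L t * Real.exp (-x ^ 2 / (2 * (1 + s))) := by ring
        _ ≤ (1 + s)⁻¹ * (1 + s) ^ (-(1:ℝ)/2) * (2 ^ (P.a + 1) * (1 + s) ^ (-P.a - 1)) *
            (τ ^ 2 * (τ ^ 2) ^ P.a) * P.M * Real.exp (-x ^ 2 / (2 * (1 + s))) := by gcongr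
        _ = _ := by ring
  have A4 : (P.c₀ * (τ ^ 2 * (τ ^ 2) ^ P.a)) *
      ∫ t in Ioi (1 / τ ^ 2), (1 + t * τ ^ 2) ^ (-(P.a + 1/2) - 1) *
      Real.exp (-x ^ 2 / (2 * (1 + t * τ ^ 2))) ≤ ∫ t in Ioi 0, wt P x τ t := by
    refine le_trans ?_ (D_ge_sub P hg x τ hs2)
    rw [← integral_const_mul]
    apply setInt_mono measurableSet_Ioi
    · intro t ht
      have htp : 0 < t := hs2 ht
      positivity
    · exact (wt_int P hg x τ).mono_set hs2
    · intro t ht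
      have ht' : 1 / τ ^ 2 < t := ht
      have htp : 0 < t := hs2 ht
      have hu := u_ge (τ := τ) htp
      have hs : 1 < t * τ ^ 2 := by rwa [div_lt_iff₀ h2] at ht'
      have htt : P.t₀ ≤ t := by
        by_contra hh
        push Not at hh
        nlinarith
      have hL := P.L_ge t htt
      have e3 := P.L_pos t htp
      rw [wt_eq, gk, tpow P.a hτ htp]
      set s := t * τ ^ 2
      have e4 : (1 + s) ^ (-P.a - 1) ≤ s ^ (-P.a - 1) :=
        Real.rpow_le_rpow_of_nonpos (by linarith) (by linarith) (by linarith)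
      have e5 : (1 + s) ^ (-(1:ℝ)/2) * (1 + s) ^ (-P.a - 1) =
          (1 + s) ^ (-(P.a + 1/2) - 1) := by
        rw [← Real.rpow_add (by linarith)]
        congr 1; ring
      rw [← e5]
      calc _ = (1 + s) ^ (-(1:ℝ)/2) * ((1 + s) ^ (-P.a - 1) * (τ ^ 2 * (τ ^ 2) ^ P.a) *
            P.c₀) * Real.exp (-x ^ 2 / (2 * (1 + s))) := by ring
        _ ≤ _ := by gcongr
  set A := ∫ t in Ioi (1 / τ ^ 2), (1 + t * τ ^ 2) ^ (-(P.a + 1/2) - 2) *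
      Real.exp (-x ^ 2 / (2 * (1 + t * τ ^ 2)))
  set B := ∫ t in Ioi (1 / τ ^ 2), (1 + t * τ ^ 2) ^ (-(P.a + 1/2) - 1) *
      Real.exp (-x ^ 2 / (2 * (1 + t * τ ^ 2)))
  set D := ∫ t in Ioi 0, wt P x τ t
  rw [hsplit, mul_add]
  refine add_le_add ?_ ?_
  · calc _ ≤ x ^ 2 * (((∫ t in Ioi 0, gk P t) + 1) * Real.exp (-x ^ 2 / 4)) := by gcongr
      _ = _ := by ring
  · calc _ ≤ x ^ 2 * ((P.M * 2 ^ (P.a + 1) * (τ ^ 2 * (τ ^ 2) ^ P.a)) * A) := by gcongr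
      _ = (P.M * 2 ^ (P.a + 1) * (τ ^ 2 * (τ ^ 2) ^ P.a)) * (x ^ 2 * A) := by ring
      _ ≤ (P.M * 2 ^ (P.a + 1) * (τ ^ 2 * (τ ^ 2) ^ P.a)) * (2 * (P.a + 1/2) * B) := by gcongr
      _ = P.M * 2 ^ (P.a + 1) * (2 * (P.a + 1/2)) / P.c₀ *
          ((P.c₀ * (τ ^ 2 * (τ ^ 2) ^ P.a)) * B) := by field_simp
      _ ≤ _ := by gcongr

/-- posterior mean square deviation, as integral over the local variance -/
def Vv (P : Prior) (τ x : ℝ) : ℝ :=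
  (∫ t in Ioi (0:ℝ), ((1 - 1 / (1 + t * τ ^ 2)) +
    (x * (1 - 1 / (1 + t * τ ^ 2)) - T P τ x) ^ 2) * wt P x τ t) / ∫ t in Ioi (0:ℝ), wt P x τ t

lemma D_pos (P : Prior) (hg : IntegrableOn (gk P) (Ioi 0)) (x τ : ℝ) :
    0 < ∫ t in Ioi (0:ℝ), wt P x τ t := by
  rw [setIntegral_pos_iff_support_of_nonneg_ae]
  · have : Function.support (wt P x τ) ∩ Ioi 0 = Ioi 0 := by
      apply inter_eq_right.2
      intro t ht
      exact (wt_pos P x τ ht).ne'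
    rw [this]; simp
  · exact (ae_restrict_iff' measurableSet_Ioi).2
      (Eventually.of_forall fun t ht => (wt_pos P x τ ht).le)
  · exact wt_int P hg x τ

lemma V_le (P : Prior) (hg : IntegrableOn (gk P) (Ioi 0)) (x τ b : ℝ) :
    Vv P τ x ≤ (∫ t in Ioi 0, (1 - 1 / (1 + t * τ ^ 2)) * wt P x τ t) /
        (∫ t in Ioi 0, wt P x τ t) +
      x ^ 2 * (∫ t in Ioi 0, (1 / (1 + t * τ ^ 2) - b) ^ 2 * wt P x τ t) /
        (∫ t in Ioi 0, wt P x τ t) := by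
  have hD := D_pos P hg x τ
  have iD := wt_int P hg x τ
  set D := ∫ t in Ioi 0, wt P x τ t with hDdef
  have i1 := kwt_int P hg x τ (fun κ => κ) continuous_id
  have i2 := kwt_int P hg x τ (fun κ => κ ^ 2) (by fun_prop)
  have i3 := kwt_int P hg x τ (fun κ => 1 - κ) (by fun_prop)
  set E := ∫ t in Ioi 0, (1 / (1 + t * τ ^ 2)) * wt P x τ t with hE
  set Q := ∫ t in Ioi 0, (1 / (1 + t * τ ^ 2)) ^ 2 * wt P x τ t with hQ
  have gen : ∀ b : ℝ, ∫ t in Ioi 0, (1 / (1 + t * τ ^ 2) - b) ^ 2 * wt P x τ t =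
      Q - 2 * b * E + b ^ 2 * D := by
    intro b
    have : ∀ t, (1 / (1 + t * τ ^ 2) - b) ^ 2 * wt P x τ t =
      ((1 / (1 + t * τ ^ 2)) ^ 2 * wt P x τ t - (2 * b) * ((1 / (1 + t * τ ^ 2)) * wt P x τ t)) +
        b ^ 2 * wt P x τ t := fun t => by ring
    simp_rw [this]
    have i12 : IntegrableOn (fun t => (1 / (1 + t * τ ^ 2)) ^ 2 * wt P x τ t -
      (2 * b) * ((1 / (1 + t * τ ^ 2)) * wt P x τ t)) (Ioi 0) := i2.sub (i1.const_mul _)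
    rw [integral_add i12 (iD.const_mul _),
      integral_sub i2 (i1.const_mul _), integral_const_mul, integral_const_mul]
  have hT : T P τ x = x * (1 - E / D) := rfl
  have hnum : ∫ t in Ioi (0:ℝ), ((1 - 1 / (1 + t * τ ^ 2)) +
    (x * (1 - 1 / (1 + t * τ ^ 2)) - T P τ x) ^ 2) * wt P x τ t =
    (∫ t in Ioi 0, (1 - 1 / (1 + t * τ ^ 2)) * wt P x τ t) +
      x ^ 2 * ∫ t in Ioi 0, (1 / (1 + t * τ ^ 2) - E / D) ^ 2 * wt P x τ t := by
    have i4 := kwt_int P hg x τ (fun κ => (κ - E / D) ^ 2) (by fun_prop)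
    rw [← integral_const_mul, ← integral_add i3 (i4.const_mul _)]
    congr 1
    funext t
    rw [hT]; ring
  unfold Vv
  rw [hnum, gen, gen, ← hDdef, add_div]
  have hd : Q - 2 * (E / D) * E + (E / D) ^ 2 * D ≤ Q - 2 * b * E + b ^ 2 * D := by
    have : (Q - 2 * b * E + b ^ 2 * D) - (Q - 2 * (E / D) * E + (E / D) ^ 2 * D) =
      D * (E / D - b) ^ 2 := by field_simp; ring
    nlinarith [mul_nonneg hD.le (sq_nonneg (E / D - b))]
  gcongr

lemma V_small (P : Prior) (ha : 1 / 2 ≤ P.a) (ha' : P.a < 1)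
    (hg : IntegrableOn (gk P) (Ioi 0)) :
    ∃ C > 0, ∀ τ : ℝ, 0 < τ → τ ^ 2 ≤ 1 → ∀ x : ℝ,
      Vv P τ x ≤ C * ((τ ^ 2) ^ P.a * Real.exp (x ^ 2 / 2)) := by
  obtain ⟨c, hc, hD⟩ := D1 P hg
  obtain ⟨C, hC, hN⟩ := N1 P ha'
  have hM := P.M_pos
  refine ⟨(C + 2 * P.M) / c, by positivity, ?_⟩
  intro τ hτ hτ1 x
  have hv := V_le P hg x τ 1
  have hDp := D_pos P hg x τ
  have n2 := N2 P ha ha' hτ x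
  have e : ∀ t, (1 / (1 + t * τ ^ 2) - 1) ^ 2 * wt P x τ t =
    (1 - 1 / (1 + t * τ ^ 2)) ^ 2 * wt P x τ t := fun t => by ring
  simp_rw [e] at hv
  have h2 : (0:ℝ) < τ ^ 2 := by positivity
  have hq : 0 < (τ ^ 2) ^ P.a := by positivity
  rw [← add_div] at hv
  refine hv.trans ?_
  calc _ ≤ (C * (τ ^ 2) ^ P.a + 2 * P.M * (τ ^ 2) ^ P.a) / (c * Real.exp (-x ^ 2 / 2)) := by
        have := hN τ hτ x
        have := hD τ hτ1 x
        gcongr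
    _ = _ := by
        rw [neg_div, Real.exp_neg]; field_simp

lemma V_big (P : Prior) (hg : IntegrableOn (gk P) (Ioi 0)) :
    ∃ C > 0, ∀ τ : ℝ, 0 < τ → P.t₀ * τ ^ 2 ≤ 1 → ∀ l : ℝ, 1 ≤ l →
      Real.exp (-l) ≤ (τ ^ 2) ^ P.a → ∀ x : ℝ, Vv P τ x ≤ C * l := by
  obtain ⟨c, hc, hD⟩ := D2 P hg
  obtain ⟨C0, hC0, C1, hC1, hN⟩ := N3 P hg
  refine ⟨17 + 16 * C0 / c + C1, by positivity, ?_⟩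
  intro τ hτ ht0 l hl hlq x
  have hDp := D_pos P hg x τ
  have hv := V_le P hg x τ 0
  have hD := hD τ hτ ht0 x
  have hN := hN τ hτ ht0 x
  have iD := wt_int P hg x τ
  have i1 := kwt_int P hg x τ (fun κ => κ) continuous_id
  have b1 : ∫ t in Ioi 0, (1 - 1 / (1 + t * τ ^ 2)) * wt P x τ t ≤ ∫ t in Ioi 0, wt P x τ t := by
    apply setInt_mono measurableSet_Ioi
    · intro t ht
      have := kap_mem (τ := τ) ht
      exact mul_nonneg (by linarith) (wt_pos P x τ ht).le
    · exact iD
    · intro t ht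
      have := kap_mem (τ := τ) ht
      nlinarith [wt_pos P x τ ht]
  have b2 : ∫ t in Ioi 0, (1 / (1 + t * τ ^ 2) - 0) ^ 2 * wt P x τ t ≤
      ∫ t in Ioi 0, (1 / (1 + t * τ ^ 2)) * wt P x τ t := by
    apply setInt_mono measurableSet_Ioi
    · intro t ht
      exact mul_nonneg (sq_nonneg _) (wt_pos P x τ ht).le
    · exact i1
    · intro t ht
      have := kap_mem (τ := τ) ht
      apply mul_le_mul_of_nonneg_right _ (wt_pos P x τ ht).le
      rw [sub_zero]
      nlinarith
  have b3 : ∫ t in Ioi 0, (1 / (1 + t * τ ^ 2)) * wt P x τ t ≤ ∫ t in Ioi 0, wt P x τ t := by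
    apply setInt_mono measurableSet_Ioi
    · intro t ht
      have := kap_mem (τ := τ) ht
      exact mul_nonneg this.1.le (wt_pos P x τ ht).le
    · exact iD
    · intro t ht
      have := kap_mem (τ := τ) ht
      nlinarith [wt_pos P x τ ht]
  set D := ∫ t in Ioi 0, wt P x τ t
  have hv2 : Vv P τ x ≤ 1 +
      x ^ 2 * (∫ t in Ioi 0, (1 / (1 + t * τ ^ 2)) * wt P x τ t) / D := by
    refine hv.trans ?_
    have : (∫ t in Ioi 0, (1 - 1 / (1 + t * τ ^ 2)) * wt P x τ t) / D ≤ 1 := by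
      rw [div_le_one hDp]; exact b1
    gcongr
  have hcc : 0 < 16 * C0 / c := by positivity
  by_cases hx : x ^ 2 ≤ 16 * l
  · have : x ^ 2 * (∫ t in Ioi 0, (1 / (1 + t * τ ^ 2)) * wt P x τ t) / D ≤ 16 * l := by
      rw [div_le_iff₀ hDp]
      calc _ ≤ x ^ 2 * D := by gcongr
        _ ≤ _ := by gcongr
    nlinarith
  · push Not at hx
    have h2 : (0:ℝ) < τ ^ 2 := by positivity
    have hq : 0 < (τ ^ 2) ^ P.a := by positivity
    set q := (τ ^ 2) ^ P.a
    have k1 : Real.exp (-x ^ 2 / 16) ≤ q :=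
      le_trans (Real.exp_le_exp.2 (by linarith)) hlq
    have k2 : x ^ 2 * Real.exp (-x ^ 2 / 16) ≤ 16 := by
      have h := Real.add_one_le_exp (x ^ 2 / 16)
      have h1 : x ^ 2 ≤ 16 * Real.exp (x ^ 2 / 16) := by linarith
      calc _ ≤ 16 * Real.exp (x ^ 2 / 16) * Real.exp (-x ^ 2 / 16) := by gcongr
        _ = 16 := by rw [mul_assoc, ← Real.exp_add]; ring_nf; simp
    have k3 : Real.exp (-x ^ 2 / 4) =
        Real.exp (-x ^ 2 / 16) * Real.exp (-x ^ 2 / 16) * Real.exp (-x ^ 2 / 8) := by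
      rw [← Real.exp_add, ← Real.exp_add]; ring_nf
    have k4 : C0 * (x ^ 2 * Real.exp (-x ^ 2 / 4)) ≤ 16 * C0 / c * D := by
      calc _ = C0 * ((x ^ 2 * Real.exp (-x ^ 2 / 16)) * Real.exp (-x ^ 2 / 16) *
              Real.exp (-x ^ 2 / 8)) := by rw [k3]; ring
        _ ≤ C0 * (16 * q * Real.exp (-x ^ 2 / 8)) := by gcongr
        _ = 16 * C0 / c * (c * q * Real.exp (-x ^ 2 / 8)) := by field_simp
        _ ≤ _ := by gcongr
    have : x ^ 2 * (∫ t in Ioi 0, (1 / (1 + t * τ ^ 2)) * wt P x τ t) / D ≤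
        16 * C0 / c + C1 := by
      rw [div_le_iff₀ hDp]
      linarith
    nlinarith

/-- joint kernel -/
def jk (P : Prior) (τ x θ u : ℝ) : ℝ := Real.exp (-(x - θ) ^ 2 / 2) *
    ((Real.sqrt (2 * Real.pi * u * τ ^ 2))⁻¹ * Real.exp (-θ ^ 2 / (2 * u * τ ^ 2)) *
      (P.K * u ^ (-P.a - 1) * P.L u))

lemma jk_meas (P : Prior) (τ x : ℝ) :
    Measurable (fun z : ℝ × ℝ => jk P τ x z.1 z.2) := by
  unfold jk
  have := P.L_meas
  fun_prop

lemma jk_nonneg (P : Prior) (τ x θ : ℝ) {u : ℝ} (hu : 0 < u) : 0 ≤ jk P τ x θ u := by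
  unfold jk
  have := P.L_pos u hu
  have := P.K_pos
  positivity

lemma postw_eq (P : Prior) (τ x θ : ℝ) : postw P τ x θ = ∫ u in Ioi 0, jk P τ x θ u := by
  unfold postw pdens jk
  rw [integral_const_mul]

lemma postw_nonneg (P : Prior) (τ x θ : ℝ) : 0 ≤ postw P τ x θ := by
  rw [postw_eq]
  exact setIntegral_nonneg measurableSet_Ioi fun u hu => jk_nonneg P τ x θ hu

open ProbabilityTheory in
lemma jk_eq (P : Prior) {τ : ℝ} (hτ : 0 < τ) (x θ : ℝ) {u : ℝ} (hu : 0 < u) :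
    jk P τ x θ u = P.K * wt P x τ u *
      gaussianPDFReal (x * (1 - 1 / (1 + u * τ ^ 2)))
        (Real.toNNReal (1 - 1 / (1 + u * τ ^ 2))) θ := by
  have h2 : (0:ℝ) < τ ^ 2 := by positivity
  have hs : 0 < u * τ ^ 2 := by positivity
  have hU := u_ge (τ := τ) hu
  rw [one_sub_kap (by linarith)]
  unfold jk gaussianPDFReal wt
  rw [Real.coe_toNNReal _ (by positivity)]
  rw [show 2 * Real.pi * u * τ ^ 2 = 2 * Real.pi * (u * τ ^ 2) by ring,
    show 2 * u * τ ^ 2 = 2 * (u * τ ^ 2) by ring]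
  generalize u * τ ^ 2 = s at *
  have e1 : (Real.sqrt (2 * Real.pi * s))⁻¹ =
      (1 + s) ^ (-(1:ℝ)/2) * (Real.sqrt (2 * Real.pi * (s / (1 + s))))⁻¹ := by
    rw [neg_div, Real.rpow_neg (by linarith), ← Real.sqrt_eq_rpow, ← mul_inv,
      ← Real.sqrt_mul (by linarith)]
    congr 2
    field_simp
  have e2 : Real.exp (-(x - θ) ^ 2 / 2) * Real.exp (-θ ^ 2 / (2 * s)) =
      Real.exp (-x ^ 2 / (2 * (1 + s))) *
        Real.exp (-(θ - x * (s / (1 + s))) ^ 2 / (2 * (s / (1 + s)))) := by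
    rw [← Real.exp_add, ← Real.exp_add]
    congr 1
    field_simp
    ring
  calc _ = (Real.exp (-(x - θ) ^ 2 / 2) * Real.exp (-θ ^ 2 / (2 * s))) *
        (Real.sqrt (2 * Real.pi * s))⁻¹ * (P.K * u ^ (-P.a - 1) * P.L u) := by ring
    _ = _ := by rw [e1, e2]; ring

open ProbabilityTheory in
lemma gauss_mom (m : ℝ) {v : NNReal} (hv : v ≠ 0) (α β c : ℝ) :
    Integrable (fun θ => (α + β * (θ - c) ^ 2) * gaussianPDFReal m v θ) ∧
    ∫ θ, (α + β * (θ - c) ^ 2) * gaussianPDFReal m v θ = α + β * (v + (m - c) ^ 2) := by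
  have hm : MemLp id 2 (gaussianReal m v) := memLp_id_gaussianReal' 2 (by norm_num)
  have i1 : Integrable (fun θ => θ) (gaussianReal m v) := hm.integrable (by norm_num)
  have i2 : Integrable (fun θ => (θ - m) ^ 2) (gaussianReal m v) :=
    (hm.sub (memLp_const m)).integrable_sq
  have hvar : ∫ θ, (θ - m) ^ 2 ∂(gaussianReal m v) = v := by
    have := variance_id_gaussianReal (μ := m) (v := v)
    rw [variance_eq_integral (by fun_prop)] at this
    simpa [integral_id_gaussianReal] using this
  have hmean : ∫ θ, θ ∂(gaussianReal m v) = m := integral_id_gaussianReal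
  have e : ∀ θ, α + β * (θ - c) ^ 2 =
      β * (θ - m) ^ 2 + (2 * β * (m - c)) * θ + (α + β * ((m - c) ^ 2 - 2 * (m - c) * m)) :=
    fun θ => by ring
  have i12 : Integrable (fun θ => β * (θ - m) ^ 2 + (2 * β * (m - c)) * θ) (gaussianReal m v) :=
    (i2.const_mul _).add (i1.const_mul _)
  have itot : Integrable (fun θ => α + β * (θ - c) ^ 2) (gaussianReal m v) := by
    simp_rw [e]
    exact i12.add (integrable_const _)
  constructor
  · have h := itot
    rw [gaussianReal_of_var_ne_zero m hv, integrable_withDensity_iff_integrable_smul'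
      (measurable_gaussianPDF m v) (by simp [gaussianPDF])] at h
    refine h.congr (Eventually.of_forall fun θ => ?_)
    simp [gaussianPDF, ENNReal.toReal_ofReal (gaussianPDFReal_nonneg m v θ), mul_comm]
  · have h := integral_gaussianReal_eq_integral_smul (μ := m) (v := v)
      (f := fun θ => α + β * (θ - c) ^ 2) hv
    have h' : ∫ θ, (α + β * (θ - c) ^ 2) * gaussianPDFReal m v θ =
        ∫ θ, (α + β * (θ - c) ^ 2) ∂(gaussianReal m v) := by
      rw [h]; congr 1; funext θ; simp [mul_comm]
    rw [h']
    simp_rw [e]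
    rw [integral_add i12 (integrable_const _), integral_add (i2.const_mul _) (i1.const_mul _),
      integral_const_mul, integral_const_mul, hvar, hmean]
    simp
    ring

lemma jk_inner (P : Prior) {τ : ℝ} (hτ : 0 < τ) (x α β c : ℝ) {u : ℝ} (hu : 0 < u) :
    Integrable (fun θ => (α + β * (θ - c) ^ 2) * jk P τ x θ u) ∧
    ∫ θ, (α + β * (θ - c) ^ 2) * jk P τ x θ u = P.K * ((α + β * ((1 - 1 / (1 + u * τ ^ 2)) +
      (x * (1 - 1 / (1 + u * τ ^ 2)) - c) ^ 2)) * wt P x τ u) := by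
  have hU := u_ge (τ := τ) hu
  have hs : 0 < u * τ ^ 2 := by positivity
  have hv : 0 < 1 - 1 / (1 + u * τ ^ 2) := by
    rw [one_sub_kap (by linarith)]; positivity
  have hv0 : Real.toNNReal (1 - 1 / (1 + u * τ ^ 2)) ≠ 0 := by
    simpa using hv
  obtain ⟨h1, h2⟩ := gauss_mom (x * (1 - 1 / (1 + u * τ ^ 2))) hv0 α β c
  rw [Real.coe_toNNReal _ hv.le] at h2
  have e : ∀ θ, (α + β * (θ - c) ^ 2) * jk P τ x θ u = (P.K * wt P x τ u) *
      ((α + β * (θ - c) ^ 2) * ProbabilityTheory.gaussianPDFReal (x * (1 - 1 / (1 + u * τ ^ 2)))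
        (Real.toNNReal (1 - 1 / (1 + u * τ ^ 2))) θ) := by
    intro θ; rw [jk_eq P hτ x θ hu]; ring
  simp_rw [e]
  refine ⟨h1.const_mul _, ?_⟩
  rw [integral_const_mul, h2]; ring

lemma fub (P : Prior) (hg : IntegrableOn (gk P) (Ioi 0)) {τ : ℝ} (hτ : 0 < τ) (x c : ℝ)
    {α β : ℝ} (hα : 0 ≤ α) (hβ : 0 ≤ β) :
    Integrable (fun θ => (α + β * (θ - c) ^ 2) * postw P τ x θ) ∧
    ∫ θ, (α + β * (θ - c) ^ 2) * postw P τ x θ =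
      P.K * ∫ u in Ioi 0, (α + β * ((1 - 1 / (1 + u * τ ^ 2)) +
      (x * (1 - 1 / (1 + u * τ ^ 2)) - c) ^ 2)) * wt P x τ u := by
  have hm : Measurable (fun z : ℝ × ℝ => (α + β * (z.1 - c) ^ 2) * jk P τ x z.1 z.2) := by
    have := jk_meas P τ x
    fun_prop
  have hprod : Integrable (fun z : ℝ × ℝ => (α + β * (z.1 - c) ^ 2) * jk P τ x z.1 z.2)
      ((volume : Measure ℝ).prod (volume.restrict (Ioi 0))) := by
    rw [integrable_prod_iff' hm.aestronglyMeasurable]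
    constructor
    · exact (ae_restrict_iff' measurableSet_Ioi).2
        (Eventually.of_forall fun u hu => (jk_inner P hτ x α β c hu).1)
    · have hi := (kwt_int P hg x τ (fun κ => α + β * ((1 - κ) + (x * (1 - κ) - c) ^ 2))
        (by fun_prop)).const_mul P.K
      refine hi.congr ?_
      refine (ae_restrict_iff' measurableSet_Ioi).2 (Eventually.of_forall fun u hu => ?_)
      simp only
      rw [← (jk_inner P hτ x α β c hu).2]
      congr 1
      funext θ
      rw [Real.norm_of_nonneg]
      exact mul_nonneg (by positivity) (jk_nonneg P τ x θ hu)
  have e : ∀ θ, (α + β * (θ - c) ^ 2) * postw P τ x θ =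
      ∫ u in Ioi 0, (α + β * (θ - c) ^ 2) * jk P τ x θ u := by
    intro θ; rw [integral_const_mul, postw_eq]
  simp_rw [e]
  refine ⟨hprod.integral_prod_left, ?_⟩
  rw [integral_integral_swap hprod, ← integral_const_mul]
  apply setIntegral_congr_fun measurableSet_Ioi
  intro u hu
  exact (jk_inner P hτ x α β c hu).2

set_option maxHeartbeats 1000000 in
lemma jk_int_u (P : Prior) {τ : ℝ} (hτ : 0 < τ) (x : ℝ) {θ : ℝ} (hθ : θ ≠ 0) :
    IntegrableOn (fun u => jk P τ x θ u) (Ioi 0) := by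
  have hap := P.a_pos
  have h2 : (0:ℝ) < τ ^ 2 := by positivity
  have hm : Measurable (fun u => jk P τ x θ u) :=
    (jk_meas P τ x).comp (measurable_const.prodMk measurable_id)
  rw [← Ioc_union_Ioi_eq_Ioi (zero_le_one (α := ℝ))]
  -- a uniform bound for the exponential against powers
  obtain ⟨n, hn⟩ := exists_nat_gt (P.a + 3 / 2)
  set d := θ ^ 2 / (2 * τ ^ 2) with hd
  have hdp : 0 < d := by positivity
  have hKp := P.K_pos
  have hMp := P.M_pos
  have hbase : ∀ u : ℝ, 0 < u → jk P τ x θ u ≤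
      P.K * P.M * (Real.sqrt (2 * Real.pi * τ ^ 2))⁻¹ *
        (u ^ (-P.a - 3/2) * Real.exp (-(d / u))) := by
    intro u hu
    unfold jk
    have e1 : Real.exp (-(x - θ) ^ 2 / 2) ≤ 1 := by
      apply Real.exp_le_one_iff.2; nlinarith [sq_nonneg (x - θ)]
    have e2 : (Real.sqrt (2 * Real.pi * u * τ ^ 2))⁻¹ =
        (Real.sqrt (2 * Real.pi * τ ^ 2))⁻¹ * u ^ (-(1:ℝ)/2) := by
      rw [show 2 * Real.pi * u * τ ^ 2 = (2 * Real.pi * τ ^ 2) * u by ring,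
        Real.sqrt_mul (by positivity), mul_inv, neg_div, Real.rpow_neg hu.le,
        Real.sqrt_eq_rpow u]
    have e3 : -θ ^ 2 / (2 * u * τ ^ 2) = -(d / u) := by rw [hd]; field_simp
    have e4 : u ^ (-P.a - 3/2) = u ^ (-(1:ℝ)/2) * u ^ (-P.a - 1) := by
      rw [← Real.rpow_add hu]; congr 1; ring
    have e5 := P.L_le u hu
    have e6 := P.L_pos u hu
    rw [e2, e3, e4]
    calc _ ≤ 1 * ((Real.sqrt (2 * Real.pi * τ ^ 2))⁻¹ * u ^ (-(1:ℝ)/2) * Real.exp (-(d / u)) *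
          (P.K * u ^ (-P.a - 1) * P.M)) := by gcongr
      _ = _ := by ring
  apply IntegrableOn.union
  · have hfin : IntegrableOn (fun _ : ℝ => P.K * P.M * (Real.sqrt (2 * Real.pi * τ ^ 2))⁻¹ *
        (n.factorial / d ^ n)) (Ioc (0:ℝ) 1) := by
      apply integrableOn_const (by simp)
    refine Integrable.mono' hfin hm.aestronglyMeasurable ?_
    refine (ae_restrict_iff' measurableSet_Ioc).2 (Eventually.of_forall fun u hu => ?_)
    have hu0 := hu.1
    rw [Real.norm_of_nonneg (jk_nonneg P τ x θ hu0)]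
    refine (hbase u hu0).trans ?_
    gcongr
    have k1 : (d / u) ^ n / n.factorial ≤ Real.exp (d / u) :=
      Real.pow_div_factorial_le_exp _ (by positivity) n
    have k2 : Real.exp (-(d / u)) ≤ n.factorial / d ^ n * u ^ n := by
      rw [Real.exp_neg, inv_le_comm₀ (Real.exp_pos _) (by positivity)]
      refine le_trans (le_of_eq ?_) k1
      clear_value d
      rw [div_pow]; field_simp
    have k3 : u ^ (-P.a - 3/2) * u ^ n ≤ 1 := by
      rw [← Real.rpow_natCast, ← Real.rpow_add hu0]
      exact Real.rpow_le_one hu0.le hu.2 (by linarith)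
    calc _ ≤ u ^ (-P.a - 3/2) * (n.factorial / d ^ n * u ^ n) := by gcongr
      _ = (n.factorial / d ^ n) * (u ^ (-P.a - 3/2) * u ^ n) := by ring
      _ ≤ (n.factorial / d ^ n) * 1 := by gcongr
      _ = _ := by ring
  · have hfin : IntegrableOn (fun u : ℝ => P.K * P.M * (Real.sqrt (2 * Real.pi * τ ^ 2))⁻¹ *
        u ^ (-P.a - 3/2)) (Ioi (1:ℝ)) :=
      (integrableOn_Ioi_rpow_of_lt (by linarith) one_pos).const_mul _
    refine Integrable.mono' hfin hm.aestronglyMeasurable ?_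
    refine (ae_restrict_iff' measurableSet_Ioi).2 (Eventually.of_forall fun u hu => ?_)
    have hu1 : 1 < u := hu
    have hu0 : 0 < u := by linarith
    rw [Real.norm_of_nonneg (jk_nonneg P τ x θ hu0)]
    refine (hbase u hu0).trans ?_
    gcongr
    have : Real.exp (-(d / u)) ≤ 1 := by
      apply Real.exp_le_one_iff.2
      have : 0 < d / u := by positivity
      linarith
    have h0 : 0 ≤ u ^ (-P.a - 3/2) := by positivity
    nlinarith

lemma proper_of_postw (P : Prior) {τ : ℝ} (hτ : 0 < τ) (x : ℝ)
    (h : Integrable (postw P τ x)) : IntegrableOn (gk P) (Ioi 0) := by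
  have hKp := P.K_pos
  have hap := P.a_pos
  have hprod : Integrable (fun z : ℝ × ℝ => jk P τ x z.1 z.2)
      ((volume : Measure ℝ).prod (volume.restrict (Ioi 0))) := by
    rw [integrable_prod_iff (jk_meas P τ x).aestronglyMeasurable]
    constructor
    · have : ∀ᵐ θ : ℝ, θ ≠ 0 := by
        rw [ae_iff]; simp
      filter_upwards [this] with θ hθ
      exact jk_int_u P hτ x hθ
    · refine h.congr (Eventually.of_forall fun θ => ?_)
      simp only
      rw [postw_eq]
      apply setIntegral_congr_fun measurableSet_Ioi
      intro u hu
      simp only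
      rw [Real.norm_of_nonneg (jk_nonneg P τ x θ hu)]
  have hw : IntegrableOn (fun u => P.K * wt P x τ u) (Ioi 0) := by
    refine hprod.integral_prod_right.congr ?_
    refine (ae_restrict_iff' measurableSet_Ioi).2 (Eventually.of_forall fun u hu => ?_)
    have := (jk_inner P hτ x 1 0 0 hu).2
    simpa using this
  rw [← Ioc_union_Ioi_eq_Ioi (zero_le_one (α := ℝ))]
  apply IntegrableOn.union
  · have hfin : IntegrableOn (fun u => ((1 + τ ^ 2) ^ ((1:ℝ)/2) * Real.exp (x ^ 2 / 2) / P.K) *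
        (P.K * wt P x τ u)) (Ioc 0 1) := (hw.mono_set Ioc_subset_Ioi_self).const_mul _
    refine Integrable.mono' hfin (gk_meas P).aestronglyMeasurable ?_
    refine (ae_restrict_iff' measurableSet_Ioc).2 (Eventually.of_forall fun u hu => ?_)
    have hg := gk_pos P hu.1
    have hU := u_ge (τ := τ) hu.1
    rw [Real.norm_of_nonneg hg.le, wt_eq]
    have k1 : 1 ≤ (1 + τ ^ 2) ^ ((1:ℝ)/2) * (1 + u * τ ^ 2) ^ (-(1:ℝ)/2) := by
      have : (1 + u * τ ^ 2) ^ ((1:ℝ)/2) * (1 + u * τ ^ 2) ^ (-(1:ℝ)/2) = 1 := by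
        rw [← Real.rpow_add (by linarith)]; norm_num
      refine this.symm.le.trans ?_
      have : (1 + u * τ ^ 2) ≤ 1 + τ ^ 2 := by nlinarith [hu.2, sq_nonneg τ]
      gcongr
    have k2 : 1 ≤ Real.exp (x ^ 2 / 2) * Real.exp (-x ^ 2 / (2 * (1 + u * τ ^ 2))) := by
      rw [← Real.exp_add]
      apply Real.one_le_exp
      have : x ^ 2 / (2 * (1 + u * τ ^ 2)) ≤ x ^ 2 / 2 :=
        div_le_div_of_nonneg_left (sq_nonneg x) (by norm_num) (by linarith)
      rw [neg_div]; linarith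
    calc gk P u = 1 * 1 * gk P u := by ring
      _ ≤ ((1 + τ ^ 2) ^ ((1:ℝ)/2) * (1 + u * τ ^ 2) ^ (-(1:ℝ)/2)) *
          (Real.exp (x ^ 2 / 2) * Real.exp (-x ^ 2 / (2 * (1 + u * τ ^ 2)))) * gk P u := by
            gcongr
      _ = _ := by field_simp
  · have hfin : IntegrableOn (fun u : ℝ => u ^ (-P.a - 1) * P.M) (Ioi (1:ℝ)) :=
      (integrableOn_Ioi_rpow_of_lt (by linarith) one_pos).mul_const _
    refine Integrable.mono' hfin (gk_meas P).aestronglyMeasurable ?_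
    refine (ae_restrict_iff' measurableSet_Ioi).2 (Eventually.of_forall fun u hu => ?_)
    have hu1 : 1 < u := hu
    have hu0 : 0 < u := by linarith
    rw [Real.norm_of_nonneg (gk_pos P hu0).le, gk]
    have := P.L_le u hu0
    gcongr

lemma prod_sum {n : ℕ} (w h : Fin n → ℝ → ℝ) (hw : ∀ i, Integrable (w i))
    (hh : ∀ i, Integrable (fun y => h i y * w i y)) :
    Integrable (fun x : Fin n → ℝ => (∑ i, h i (x i)) * ∏ j, w j (x j)) ∧
    ∫ x : Fin n → ℝ, (∑ i, h i (x i)) * ∏ j, w j (x j) =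
      ∑ i, (∫ y, h i y * w i y) * ∏ j ∈ Finset.univ.erase i, ∫ y, w j y := by
  classical
  let F : Fin n → Fin n → ℝ → ℝ := fun i j => if j = i then fun y => h i y * w i y else w j
  have hF : ∀ i j, Integrable (F i j) := by
    intro i j
    by_cases hij : j = i
    · simp only [F, hij, if_true]; exact hh i
    · simp only [F, hij, if_false]; exact hw j
  have e : ∀ i (x : Fin n → ℝ), h i (x i) * ∏ j, w j (x j) = ∏ j, F i j (x j) := by
    intro i x
    rw [← Finset.mul_prod_erase Finset.univ (fun j => w j (x j)) (Finset.mem_univ i),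
      ← Finset.mul_prod_erase Finset.univ (fun j => F i j (x j)) (Finset.mem_univ i), ← mul_assoc]
    congr 1
    · simp [F]
    · apply Finset.prod_congr rfl
      intro j hj
      simp [F, Finset.ne_of_mem_erase hj]
  have hi : ∀ i, Integrable (fun x : Fin n → ℝ => ∏ j, F i j (x j)) := fun i =>
    Integrable.fintype_prod (fun j => hF i j)
  simp_rw [Finset.sum_mul, e]
  refine ⟨integrable_finsetSum _ fun i _ => hi i, ?_⟩
  rw [integral_finsetSum _ fun i _ => hi i]
  apply Finset.sum_congr rfl
  intro i _
  rw [integral_fintype_prod_volume_eq_prod,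
    ← Finset.mul_prod_erase Finset.univ _ (Finset.mem_univ i)]
  congr 1
  · simp [F]
  · apply Finset.prod_congr rfl
    intro j hj
    simp [F, Finset.ne_of_mem_erase hj]

lemma postProb_nonneg (P : Prior) (τ : ℝ) {n : ℕ} (x : Fin n → ℝ) (A : Set (Fin n → ℝ)) :
    0 ≤ postProb P τ x A := by
  unfold postProb
  apply div_nonneg
  · apply integral_nonneg
    intro θ
    exact Finset.prod_nonneg fun i _ => postw_nonneg P τ _ _
  · apply integral_nonneg
    intro θ
    exact Finset.prod_nonneg fun i _ => postw_nonneg P τ _ _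

lemma postProb_improper (P : Prior) (hg : ¬ IntegrableOn (gk P) (Ioi 0)) {τ : ℝ} (hτ : 0 < τ)
    {n : ℕ} (hn : 0 < n) (x : Fin n → ℝ) (A : Set (Fin n → ℝ)) :
    postProb P τ x A = 0 := by
  unfold postProb
  rw [integral_fintype_prod_volume_eq_prod (fun i => postw P τ (x i))]
  rw [Finset.prod_eq_zero (Finset.mem_univ (⟨0, hn⟩ : Fin n)), div_zero]
  exact integral_undef fun h => hg (proper_of_postw P hτ _ h)

lemma markov (P : Prior) (hg : IntegrableOn (gk P) (Ioi 0)) {τ : ℝ} (hτ : 0 < τ)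
    {n : ℕ} (x : Fin n → ℝ) {R : ℝ} (hR : 0 < R) :
    postProb P τ x {θ : Fin n → ℝ | R < ∑ i, (θ i - T P τ (x i)) ^ 2} ≤
      ∑ i, Vv P τ (x i) / R := by
  have hK := P.K_pos
  have f0 : ∀ y, Integrable (postw P τ y) ∧ ∫ θ, postw P τ y θ =
      P.K * ∫ u in Ioi 0, wt P y τ u := by
    intro y
    have := fub P hg hτ y 0 (α := 1) (β := 0) (by norm_num) le_rfl
    simpa using this
  have f1 : ∀ y, Integrable (fun θ => (θ - T P τ y) ^ 2 * postw P τ y θ) ∧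
      ∫ θ, (θ - T P τ y) ^ 2 * postw P τ y θ = Vv P τ y * ∫ θ, postw P τ y θ := by
    intro y
    have := fub P hg hτ y (T P τ y) (α := 0) (β := 1) le_rfl (by norm_num)
    simp only [zero_add, one_mul] at this
    refine ⟨this.1, ?_⟩
    rw [this.2, (f0 y).2, Vv]
    have hDy := D_pos P hg y τ
    rw [mul_left_comm, div_mul_cancel₀ _ hDy.ne']
  have hD : ∀ y, 0 < ∫ θ, postw P τ y θ := by
    intro y; rw [(f0 y).2]; exact mul_pos hK (D_pos P hg y τ)
  obtain ⟨g1, g2⟩ := prod_sum (fun i => postw P τ (x i)) (fun i θ => (θ - T P τ (x i)) ^ 2)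
    (fun i => (f0 (x i)).1) (fun i => (f1 (x i)).1)
  have g3 : ∫ θ : Fin n → ℝ, (∑ i, (θ i - T P τ (x i)) ^ 2) * ∏ j, postw P τ (x j) (θ j) =
      (∑ i, Vv P τ (x i)) * ∏ j, ∫ θ, postw P τ (x j) θ := by
    rw [g2, Finset.sum_mul]
    apply Finset.sum_congr rfl
    intro i _
    rw [(f1 (x i)).2, mul_assoc, Finset.mul_prod_erase Finset.univ
      (fun j => ∫ θ, postw P τ (x j) θ) (Finset.mem_univ i)]
  have hpr : ∀ θ : Fin n → ℝ, 0 ≤ ∏ j, postw P τ (x j) (θ j) := fun θ =>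
    Finset.prod_nonneg fun i _ => postw_nonneg P τ _ _
  have hA : MeasurableSet {θ : Fin n → ℝ | R < ∑ i, (θ i - T P τ (x i)) ^ 2} := by
    apply measurableSet_lt measurable_const
    fun_prop
  unfold postProb
  rw [integral_fintype_prod_volume_eq_prod (fun i => postw P τ (x i))]
  have hden : 0 < ∏ i, ∫ θ, postw P τ (x i) θ := Finset.prod_pos fun i _ => hD _
  rw [div_le_iff₀ hden, ← Finset.sum_div, div_mul_eq_mul_div, ← g3, ← integral_div]
  calc _ ≤ ∫ θ in {θ : Fin n → ℝ | R < ∑ i, (θ i - T P τ (x i)) ^ 2},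
        (∑ i, (θ i - T P τ (x i)) ^ 2) * (∏ j, postw P τ (x j) (θ j)) / R := by
        apply integral_mono_of_nonneg (Eventually.of_forall hpr)
        · exact (g1.div_const R).integrableOn
        · refine (ae_restrict_iff' hA).2 (Eventually.of_forall fun θ hθ => ?_)
          have hθ' : R < ∑ i, (θ i - T P τ (x i)) ^ 2 := hθ
          simp only
          rw [le_div_iff₀ hR, mul_comm]
          exact mul_le_mul_of_nonneg_right hθ'.le (hpr θ)
    _ ≤ _ := by
        apply setIntegral_le_integral (g1.div_const R)
        refine Eventually.of_forall fun θ => ?_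
        have := hpr θ
        have : 0 ≤ ∑ i, (θ i - T P τ (x i)) ^ 2 := Finset.sum_nonneg fun i _ => sq_nonneg _
        simp only [Pi.zero_apply]
        positivity

lemma gauss_eq (θ y : ℝ) : gauss (y - θ) = ProbabilityTheory.gaussianPDFReal θ 1 y := by
  unfold gauss ProbabilityTheory.gaussianPDFReal
  simp

lemma gauss_int (θ : ℝ) : Integrable (fun y => gauss (y - θ)) := by
  simp_rw [gauss_eq]; exact ProbabilityTheory.integrable_gaussianPDFReal θ 1

lemma gauss_one (θ : ℝ) : ∫ y, gauss (y - θ) = 1 := by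
  simp_rw [gauss_eq]; exact ProbabilityTheory.integral_gaussianPDFReal_eq_one θ one_ne_zero

lemma gauss_nonneg (z : ℝ) : 0 ≤ gauss z := by unfold gauss; positivity

lemma gauss_meas : Measurable gauss := by unfold gauss; fun_prop

lemma gauss_le (z : ℝ) : gauss z ≤ Real.exp (-z ^ 2 / 2) := by
  unfold gauss
  have : (Real.sqrt (2 * Real.pi))⁻¹ ≤ 1 := by
    apply inv_le_one_of_one_le₀
    rw [Real.one_le_sqrt]
    linarith [Real.pi_gt_three]
  have := Real.exp_pos (-z ^ 2 / 2)
  nlinarith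

lemma EN_bound {n : ℕ} (θ₀ : Fin n → ℝ) (f : (Fin n → ℝ) → ℝ) (hf0 : ∀ x, 0 ≤ f x)
    (B : Fin n → ℝ → ℝ) (hB : ∀ i, Integrable (fun y => B i y * gauss (y - θ₀ i)))
    (hf : ∀ x, f x ≤ ∑ i, B i (x i)) :
    EN n θ₀ f ≤ ∑ i, ∫ y, B i y * gauss (y - θ₀ i) := by
  obtain ⟨g1, g2⟩ := prod_sum (fun i y => gauss (y - θ₀ i)) B (fun i => gauss_int _) hB
  have hpr : ∀ x : Fin n → ℝ, 0 ≤ ∏ i, gauss (x i - θ₀ i) := fun x =>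
    Finset.prod_nonneg fun i _ => gauss_nonneg _
  unfold EN
  calc _ ≤ ∫ x : Fin n → ℝ, (∑ i, B i (x i)) * ∏ i, gauss (x i - θ₀ i) := by
        apply integral_mono_of_nonneg
        · exact Eventually.of_forall fun x => mul_nonneg (hf0 x) (hpr x)
        · exact g1
        · exact Eventually.of_forall fun x => mul_le_mul_of_nonneg_right (hf x) (hpr x)
    _ = _ := by
        rw [g2]
        simp [gauss_one]

/-- pointwise majorant at zero coordinates -/
def B0 (q l y : ℝ) : ℝ := if |y| ≤ 2 * Real.sqrt l then q * Real.exp (y ^ 2 / 2) else l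

lemma B0_int {q l : ℝ} (hq : 0 ≤ q) (hl : 0 ≤ l) :
    Integrable (fun y => B0 q l y * gauss y) ∧
    ∫ y, B0 q l y * gauss y ≤
      4 * Real.sqrt l * q + l * Real.exp (-l) * Real.sqrt (Real.pi / (1/4)) := by
  have hsl := Real.sqrt_nonneg l
  have hm : Measurable (fun y => B0 q l y * gauss y) := by
    unfold B0
    refine Measurable.mul (Measurable.ite ?_ (by fun_prop) measurable_const) gauss_meas
    exact measurableSet_le (by fun_prop) measurable_const
  have hG : Integrable (fun y : ℝ => Real.exp (-(1/4) * y ^ 2)) :=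
    integrable_exp_neg_mul_sq (by norm_num)
  have hI : Integrable ((Icc (-(2 * Real.sqrt l)) (2 * Real.sqrt l)).indicator
      (fun _ : ℝ => q)) :=
    (integrable_indicator_iff measurableSet_Icc).2 (integrableOn_const (by simp))
  have hsum := hI.add (hG.const_mul (l * Real.exp (-l)))
  have h0 : ∀ y, 0 ≤ B0 q l y * gauss y := by
    intro y
    refine mul_nonneg ?_ (gauss_nonneg y)
    unfold B0
    split_ifs <;> positivity
  have hle : ∀ y, B0 q l y * gauss y ≤ (Icc (-(2 * Real.sqrt l)) (2 * Real.sqrt l)).indicator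
      (fun _ : ℝ => q) y + l * Real.exp (-l) * Real.exp (-(1/4) * y ^ 2) := by
    intro y
    have hgl := gauss_le y
    unfold B0
    split_ifs with hy
    · rw [indicator_of_mem (mem_Icc.2 (abs_le.1 hy))]
      have : q * Real.exp (y ^ 2 / 2) * gauss y ≤ q := by
        calc _ ≤ q * Real.exp (y ^ 2 / 2) * Real.exp (-y ^ 2 / 2) := by gcongr
          _ = q := by rw [mul_assoc, ← Real.exp_add]; ring_nf; simp
      have : 0 ≤ l * Real.exp (-l) * Real.exp (-(1/4) * y ^ 2) := by positivity
      linarith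
    · rw [indicator_of_notMem (fun h => hy (abs_le.2 (mem_Icc.1 h))), zero_add]
      push Not at hy
      have hy2 : 4 * l < y ^ 2 := by
        rw [← sq_abs y]
        have := Real.sq_sqrt hl
        nlinarith
      rw [mul_assoc, ← Real.exp_add]
      refine mul_le_mul_of_nonneg_left (hgl.trans (Real.exp_le_exp.2 ?_)) hl
      linarith
  refine ⟨Integrable.mono' hsum hm.aestronglyMeasurable (Eventually.of_forall fun y => ?_), ?_⟩
  · rw [Real.norm_of_nonneg (h0 y)]
    exact hle y
  · refine (integral_mono_of_nonneg (Eventually.of_forall h0) hsum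
      (Eventually.of_forall hle)).trans (le_of_eq ?_)
    rw [integral_add' hI (hG.const_mul _), integral_indicator measurableSet_Icc,
      setIntegral_const, integral_const_mul, integral_gaussian, Measure.real, Real.volume_Icc,
      ENNReal.toReal_ofReal (by linarith), smul_eq_mul]
    ring

lemma core (P : Prior) (ha : 1 / 2 ≤ P.a) (ha' : P.a < 1)
    (hg : IntegrableOn (gk P) (Ioi 0)) :
    ∃ C > 0, ∀ (n p : ℕ), 0 < n → 0 < p → ∀ τ l : ℝ, 0 < τ → τ ^ 2 ≤ 1 → P.t₀ * τ ^ 2 ≤ 1 →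
      1 ≤ l → Real.exp (-l) = p / n → (τ ^ 2) ^ P.a = p / n * Real.sqrt l →
      ∀ M : ℝ, 0 < M → ∀ θ₀ ∈ nearlyBlack n p,
      EN n θ₀ (fun x => postProb P τ x
        {θ : Fin n → ℝ | M * p * l < ∑ i, (θ i - T P τ (x i)) ^ 2}) ≤ C / M := by
  obtain ⟨C1, hC1, h1⟩ := V_small P ha ha' hg
  obtain ⟨C2, hC2, h2⟩ := V_big P hg
  set G := Real.sqrt (Real.pi / (1/4)) with hG
  have hG0 : 0 ≤ G := Real.sqrt_nonneg _
  set C := C1 + C2 with hC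
  have hCp : 0 < C := by positivity
  refine ⟨C * (5 + G), by positivity, ?_⟩
  intro n p hn hp τ l hτ hτ1 ht0 hl hel hq M hM θ₀ hθ₀
  have hnr : (0:ℝ) < n := by exact_mod_cast hn
  have hpr : (0:ℝ) < p := by exact_mod_cast hp
  have hsl : 1 ≤ Real.sqrt l := by rw [Real.one_le_sqrt]; exact hl
  have hqp : 0 < (τ ^ 2) ^ P.a := by rw [hq]; positivity
  have helq : Real.exp (-l) ≤ (τ ^ 2) ^ P.a := by
    rw [hq, hel]
    have : (0:ℝ) < p / n := by positivity
    nlinarith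
  set q := (τ ^ 2) ^ P.a with hqd
  have hR : 0 < M * p * l := by positivity
  have b2 : ∀ y, Vv P τ y ≤ C * l := fun y => by
    have := h2 τ hτ ht0 l hl helq y
    nlinarith
  have b1 : ∀ y, Vv P τ y ≤ C * B0 q l y := fun y => by
    unfold B0
    split_ifs
    · refine (h1 τ hτ hτ1 y).trans ?_
      gcongr
      linarith
    · exact b2 y
  obtain ⟨i0, i0'⟩ := B0_int hqp.le (by linarith : (0:ℝ) ≤ l)
  classical
  let B : Fin n → ℝ → ℝ := fun i y => if θ₀ i = 0 then (C / (M * p * l)) * B0 q l y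
    else (C / (M * p * l)) * l
  have hEN := EN_bound θ₀ (fun x => postProb P τ x
        {θ : Fin n → ℝ | M * p * l < ∑ i, (θ i - T P τ (x i)) ^ 2})
        (fun x => postProb_nonneg P τ x _) B ?_ ?_
  · refine hEN.trans ?_
    have hterm : ∀ i, ∫ y, B i y * gauss (y - θ₀ i) ≤
        (C / (M * p * l)) * (if θ₀ i ≠ 0 then l else 0) +
        (C / (M * p * l)) * (4 * Real.sqrt l * q + l * Real.exp (-l) * G) := by
      intro i
      by_cases hi : θ₀ i = 0
      · simp only [B, hi, if_true, sub_zero, ne_eq, not_true, if_false, mul_zero, zero_add]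
        simp_rw [mul_assoc (C / (M * p * l))]
        rw [integral_const_mul]
        gcongr
      · simp only [B, hi, if_false, ne_eq, not_false_iff, if_true]
        rw [integral_const_mul, gauss_one, mul_one]
        have : 0 ≤ (C / (M * p * l)) * (4 * Real.sqrt l * q + l * Real.exp (-l) * G) := by
          positivity
        linarith
    refine (Finset.sum_le_sum fun i _ => hterm i).trans ?_
    rw [Finset.sum_add_distrib, ← Finset.mul_sum, Finset.sum_const, Finset.card_univ,
      Fintype.card_fin, ← Finset.sum_filter, Finset.sum_const, nsmul_eq_mul, nsmul_eq_mul]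
    have hcard : ((Finset.univ.filter fun i => θ₀ i ≠ 0).card : ℝ) ≤ p := by
      have h : (Finset.univ.filter fun i => θ₀ i ≠ 0).card ≤ p := by
        have := hθ₀
        simp only [nearlyBlack, Set.mem_ofPred_eq] at this
        convert this
      exact_mod_cast h
    have hs : Real.sqrt l * Real.sqrt l = l := Real.mul_self_sqrt (by linarith)
    have e1 : 4 * Real.sqrt l * q + l * Real.exp (-l) * G = p / n * l * (4 + G) := by
      rw [hq, hel]
      linear_combination (4 * p / n : ℝ) * hs
    rw [e1]
    calc _ ≤ C / (M * p * l) * (p * l) + n * (C / (M * p * l) * (p / n * l * (4 + G))) := by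
          gcongr
      _ = _ := by field_simp; ring
  · intro i
    by_cases hi : θ₀ i = 0
    · simp only [B, hi, if_true, sub_zero]
      simp_rw [mul_assoc (C / (M * p * l))]
      exact i0.const_mul _
    · simp only [B, hi, if_false]
      exact (gauss_int _).const_mul _
  · intro x
    refine (markov P hg hτ x hR).trans (Finset.sum_le_sum fun i _ => ?_)
    rw [div_le_iff₀ hR]
    by_cases hi : θ₀ i = 0
    · simp only [B, hi, if_true]
      refine (b1 (x i)).trans (le_of_eq ?_)
      field_simp
    · simp only [B, hi, if_false]
      refine (b2 (x i)).trans (le_of_eq ?_)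
      field_simp

lemma tau_pow {a r : ℝ} (ha : 0 < a) (hr : 0 < r) : ((r ^ (1 / (2 * a))) ^ 2) ^ a = r := by
  rw [← Real.rpow_natCast, ← Real.rpow_mul hr.le, ← Real.rpow_mul hr.le]
  have : 1 / (2 * a) * ((2:ℕ):ℝ) * a = 1 := by push_cast; field_simp
  rw [this, Real.rpow_one]

lemma tau_tendsto {a : ℝ} (ha : 0 < a) :
    Tendsto (fun l : ℝ => (((Real.exp (-l) * Real.sqrt l) ^ (1 / (2 * a))) ^ 2)) atTop
      (nhds 0) := by
  have h1 : Tendsto (fun l : ℝ => Real.exp (-l) * Real.sqrt l) atTop (nhds 0) := by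
    have h := Real.tendsto_pow_mul_exp_neg_atTop_nhds_zero 1
    refine squeeze_zero' (Eventually.of_forall fun l => by positivity) ?_ h
    filter_upwards [eventually_ge_atTop 1] with l hl
    have : Real.sqrt l ≤ l := by
      rw [Real.sqrt_le_left (by linarith)]; nlinarith
    rw [pow_one, mul_comm]
    gcongr
  have h2 := (h1.rpow_const (p := 1 / (2 * a)) (Or.inr (by positivity))).pow 2
  rw [Real.zero_rpow (by positivity)] at h2
  simpa using h2

end OneGroup

open OneGroup

/-- Theorem 3.4: with `τ_n = ((p_n/n)√(log(n/p_n)))^{1/(2a)}`, the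
posterior contracts around the Bayes estimator at least as fast as the minimax risk. -/
theorem posterior_contraction_around_posterior_mean (P : Prior) (ha : 1/2 ≤ P.a) (ha' : P.a < 1)
    (p : ℕ → ℕ)
    (hp : Tendsto p atTop atTop)
    (hpo : (fun n => (p n : ℝ)) =o[atTop] (fun n => (n : ℝ)))
    (Mseq : ℕ → ℝ) (hM : Tendsto Mseq atTop atTop) :
    ∀ ε > (0:ℝ), ∃ N : ℕ, ∀ n ≥ N, ∀ θ₀ ∈ nearlyBlack n (p n),
      EN n θ₀ (fun x => postProb P
        (((p n : ℝ) / (n : ℝ) * Real.sqrt (Real.log ((n : ℝ) / (p n : ℝ)))) ^ (1 / (2 * P.a))) x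
        {θ : Fin n → ℝ |
          Mseq n * (p n : ℝ) * Real.log ((n : ℝ) / (p n : ℝ)) <
            ∑ i, (θ i - T P
              (((p n : ℝ) / (n : ℝ) * Real.sqrt (Real.log ((n : ℝ) / (p n : ℝ)))) ^ (1 / (2 * P.a)))
              (x i)) ^ 2}) < ε := by
  intro ε hε
  have hap := P.a_pos
  have hr0 : Tendsto (fun n : ℕ => (p n : ℝ) / (n : ℝ)) atTop (nhds 0) := hpo.tendsto_div_nhds_zero
  have hrpos : ∀ᶠ n : ℕ in atTop, 0 < (p n : ℝ) / (n : ℝ) := by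
    filter_upwards [hp.eventually_ge_atTop 1, eventually_ge_atTop 1] with n h1 h2
    have : (0:ℝ) < p n := by exact_mod_cast h1
    have : (0:ℝ) < n := by exact_mod_cast h2
    positivity
  have hinv : Tendsto (fun n : ℕ => (n : ℝ) / (p n : ℝ)) atTop atTop := by
    have : Tendsto (fun n : ℕ => ((p n : ℝ) / (n : ℝ))⁻¹) atTop atTop :=
      tendsto_inv_nhdsGT_zero.comp (tendsto_nhdsWithin_iff.2 ⟨hr0, hrpos⟩)
    simpa using this
  have hlog : Tendsto (fun n : ℕ => Real.log ((n : ℝ) / (p n : ℝ))) atTop atTop :=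
    Real.tendsto_log_atTop.comp hinv
  have htau := (tau_tendsto hap).comp hlog
  have hev1 := htau.eventually (gt_mem_nhds (show (0:ℝ) < 1 by norm_num))
  have hev2 := htau.eventually (gt_mem_nhds (show (0:ℝ) < 1 / P.t₀ by
    have := P.t₀_pos; positivity))
  have main : ∀ᶠ n : ℕ in atTop, ∀ θ₀ ∈ nearlyBlack n (p n),
      EN n θ₀ (fun x => postProb P
        (((p n : ℝ) / (n : ℝ) * Real.sqrt (Real.log ((n : ℝ) / (p n : ℝ)))) ^ (1 / (2 * P.a))) x
        {θ : Fin n → ℝ |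
          Mseq n * (p n : ℝ) * Real.log ((n : ℝ) / (p n : ℝ)) <
            ∑ i, (θ i - T P
              (((p n : ℝ) / (n : ℝ) * Real.sqrt (Real.log ((n : ℝ) / (p n : ℝ)))) ^ (1 / (2 * P.a)))
              (x i)) ^ 2}) < ε := by
    by_cases hg : IntegrableOn (gk P) (Ioi 0)
    · obtain ⟨C, hC, hcore⟩ := core P ha ha' hg
      filter_upwards [hp.eventually_ge_atTop 1, eventually_ge_atTop 1, hlog.eventually_ge_atTop 1,
        hev1, hev2, hM.eventually_gt_atTop 0, hM.eventually_gt_atTop (C / ε)]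
        with n hp1 hn1 hl h1 h2 hM0 hMε θ₀ hθ₀
      have hpr : (0:ℝ) < p n := by exact_mod_cast hp1
      have hnr : (0:ℝ) < n := by exact_mod_cast hn1
      have hel : Real.exp (-Real.log ((n : ℝ) / (p n : ℝ))) = (p n : ℝ) / n := by
        rw [Real.exp_neg, Real.exp_log (by positivity), inv_div]
      simp only [Function.comp_apply] at h1 h2
      rw [hel] at h1 h2
      have hsl : 0 < Real.sqrt (Real.log ((n : ℝ) / (p n : ℝ))) := Real.sqrt_pos.2 (by linarith)
      have hrp : 0 < (p n : ℝ) / (n : ℝ) * Real.sqrt (Real.log ((n : ℝ) / (p n : ℝ))) := by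
        positivity
      refine lt_of_le_of_lt (hcore n (p n) hn1 hp1 _ _ (Real.rpow_pos_of_pos hrp _) h1.le ?_ hl hel
        (tau_pow hap hrp) (Mseq n) hM0 θ₀ hθ₀) ?_
      · rw [lt_div_iff₀ P.t₀_pos] at h2
        linarith
      · rw [div_lt_iff₀ hM0]
        rw [div_lt_iff₀ hε] at hMε
        linarith
    · filter_upwards [hp.eventually_ge_atTop 1, eventually_ge_atTop 1,
        hlog.eventually_ge_atTop 1] with n hp1 hn1 hl θ₀ hθ₀
      have hpr : (0:ℝ) < p n := by exact_mod_cast hp1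
      have hnr : (0:ℝ) < n := by exact_mod_cast hn1
      have hsl : 0 < Real.sqrt (Real.log ((n : ℝ) / (p n : ℝ))) := Real.sqrt_pos.2 (by linarith)
      have hrp : 0 < (p n : ℝ) / (n : ℝ) * Real.sqrt (Real.log ((n : ℝ) / (p n : ℝ))) := by
        positivity
      unfold EN
      simp only [postProb_improper P hg (Real.rpow_pos_of_pos hrp (1 / (2 * P.a))) hn1, zero_mul,
        integral_zero]
      exact hε
  exact eventually_atTop.1 main
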